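/- Let s ∈ (3/2, 2) and α = s − 3/2. There is a constant 0 < C < ∞, depending only on s, such that for all γ ∈ 𝓜 and all u ∈ H^s(𝕋,ℝⁿ): [u]²_{H^s(γ)} ≤ 32·B¹_γ(u,u) + 128·B²_γ(u,u) + C·L(γ)·E(γ)^{(α+1)/α}·⟨u,u⟩_{H¹(γ)}; moreover ‖u‖_{H^s(γ)} ≤ √(32 + C·L(γ)·E(γ)^{(α+1)/α}) · √(G_γ(u,u)). -/

import Mathlib

open MeasureTheory Real Filter Set
open scoped ENNReal Topology RealInnerProductSpace

noncomputable section

/-- Euclidean space `ℝⁿ`. -/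
abbrev En (n : ℕ) : Type := EuclideanSpace ℝ (Fin n)

/-- A fundamental domain for the circle `𝕋 = ℝ/ℤ`. -/
def I01 : Set ℝ := Set.Ico (0 : ℝ) 1

/-- The intrinsic distance on `𝕋 = ℝ/ℤ`, expressed for real representatives. -/
def dT (x y : ℝ) : ℝ := ⨅ k : ℤ, |x - y - (k : ℝ)|

/-- Supremum norm of a (periodic) function on the circle. -/
def supNorm {E : Type*} [NormedAddCommGroup E] (f : ℝ → E) : ℝ := ⨆ x : ℝ, ‖f x‖

/-- The squared Gagliardo seminorm `[v]_{H^σ}²` of a function on the circle, valued in `[0,∞]`. -/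
def gagliardoSqE {E : Type*} [NormedAddCommGroup E] (σ : ℝ) (v : ℝ → E) : ℝ≥0∞ :=
  ∫⁻ x in I01, ∫⁻ y in I01, ENNReal.ofReal (‖v y - v x‖ ^ 2 / dT x y ^ (2 * σ + 1))

/-- Membership in the Sobolev–Slobodeckij space `H^s(𝕋, ℝⁿ)`; for `s ∈ (3/2,2)` such
functions have a `C¹` representative, which we take as the defining data. -/
def InHs {n : ℕ} (s : ℝ) (u : ℝ → En n) : Prop :=
  Function.Periodic u 1 ∧ ContDiff ℝ 1 u ∧ gagliardoSqE (s - 1) (deriv u) < ⊤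

/-- The squared `H^s` norm `‖u‖²_{L²} + ‖u'‖²_{L²} + [u']²_{H^{s-1}}`. -/
def HsNormSq {n : ℕ} (s : ℝ) (u : ℝ → En n) : ℝ :=
  (∫ x in I01, ‖u x‖ ^ 2) + (∫ x in I01, ‖deriv u x‖ ^ 2) +
    (gagliardoSqE (s - 1) (deriv u)).toReal

/-- The `H^s` norm. -/
def HsNorm {n : ℕ} (s : ℝ) (u : ℝ → En n) : ℝ := Real.sqrt (HsNormSq s u)

/-- The `H^s` inner product. -/
def HsInner {n : ℕ} (s : ℝ) (u v : ℝ → En n) : ℝ :=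
  (∫ x in I01, ⟪u x, v x⟫) + (∫ x in I01, ⟪deriv u x, deriv v x⟫) +
    ∫ x in I01, ∫ y in I01,
      ⟪deriv u y - deriv u x, deriv v y - deriv v x⟫ / dT x y ^ (2 * (s - 1) + 1)

/-- The manifold `𝓜` of embedded closed curves of class `H^s`: injective (on the circle)
immersions. -/
def InM {n : ℕ} (s : ℝ) (γ : ℝ → En n) : Prop :=
  InHs s γ ∧ Set.InjOn γ I01 ∧ ∀ x, deriv γ x ≠ 0

/-- The length `L(γ)`. -/
def arcLen {n : ℕ} (γ : ℝ → En n) : ℝ := ∫ x in I01, ‖deriv γ x‖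

/-- The arc-length distance `d_γ(x,y)`: the length of the shorter of the two arcs of `γ`
between `x` and `y`. -/
def arcDist {n : ℕ} (γ : ℝ → En n) (x y : ℝ) : ℝ :=
  ⨅ k : ℤ, |∫ t in x..(y + (k : ℝ)), ‖deriv γ t‖|

/-- Derivative with respect to arc length, `D_γ u = u' / |γ'|`. -/
def Dg {n : ℕ} (γ u : ℝ → En n) (x : ℝ) : En n := ‖deriv γ x‖⁻¹ • deriv u x

/-- `𝒟_γ u (x)`, the pointwise linear map `w ↦ |γ'(x)|⁻² ⟪γ'(x), w⟫ u'(x)`. -/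
def DDg {n : ℕ} (γ u : ℝ → En n) (x : ℝ) (w : En n) : En n :=
  ((‖deriv γ x‖ ^ 2)⁻¹ * ⟪deriv γ x, w⟫) • deriv u x

/-- The operator `R^s_γ`. -/
def Rop {n : ℕ} (s : ℝ) (γ u : ℝ → En n) (x y : ℝ) : En n :=
  (‖γ y - γ x‖ ^ s)⁻¹ • (u y - u x - DDg γ u x (γ y - γ x))

/-- Density of the measure `μ_γ` with respect to `λ ⊗ λ` on `𝕋 × 𝕋`. -/
def muW {n : ℕ} (γ : ℝ → En n) (x y : ℝ) : ℝ :=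
  ‖deriv γ x‖ * ‖deriv γ y‖ / ‖γ y - γ x‖

/-- Density of the measure `ν_γ` with respect to `λ ⊗ λ` on `𝕋 × 𝕋`. -/
def nuW {n : ℕ} (γ : ℝ → En n) (x y : ℝ) : ℝ :=
  ‖deriv γ x‖ * ‖deriv γ y‖ / arcDist γ x y

/-- The tangent-point energy, valued in `[0,∞]`. -/
def EtpE {n : ℕ} (s : ℝ) (γ : ℝ → En n) : ℝ≥0∞ :=
  ∫⁻ x in I01, ∫⁻ y in I01, ENNReal.ofReal (‖Rop s γ γ x y‖ ^ 2 * muW γ x y)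

/-- The tangent-point energy, real-valued (finite on `𝓜`). -/
def Etp {n : ℕ} (s : ℝ) (γ : ℝ → En n) : ℝ := (EtpE s γ).toReal

/-- `‖R^s_γ u‖²_{L²(ν_γ)}`, valued in `[0,∞]`. -/
def RnuSqE {n : ℕ} (s : ℝ) (γ u : ℝ → En n) : ℝ≥0∞ :=
  ∫⁻ x in I01, ∫⁻ y in I01, ENNReal.ofReal (‖Rop s γ u x y‖ ^ 2 * nuW γ x y)

/-- `‖R^s_γ u‖²_{L²(ν_γ)}`, real-valued. -/
def RnuSq {n : ℕ} (s : ℝ) (γ u : ℝ → En n) : ℝ := (RnuSqE s γ u).toReal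

/-- The squared `γ`-dependent seminorm `[u]²_{H^s(γ)}`, valued in `[0,∞]`. -/
def gagGammaSqE {n : ℕ} (s : ℝ) (γ u : ℝ → En n) : ℝ≥0∞ :=
  ∫⁻ x in I01, ∫⁻ y in I01,
    ENNReal.ofReal (‖Dg γ u y - Dg γ u x‖ ^ 2 / arcDist γ x y ^ (2 * (s - 1)) * nuW γ x y)

/-- The squared `γ`-dependent seminorm `[u]²_{H^s(γ)}`, real-valued. -/
def gagGammaSq {n : ℕ} (s : ℝ) (γ u : ℝ → En n) : ℝ := (gagGammaSqE s γ u).toReal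

/-- The inner product `⟨u,v⟩_{L²(γ)}`. -/
def innerL2g {n : ℕ} (γ u v : ℝ → En n) : ℝ := ∫ x in I01, ⟪u x, v x⟫ * ‖deriv γ x‖

/-- The inner product `⟨u,v⟩_{H¹(γ)}`. -/
def innerH1g {n : ℕ} (γ u v : ℝ → En n) : ℝ :=
  ∫ x in I01, ⟪Dg γ u x, Dg γ v x⟫ * ‖deriv γ x‖

/-- The squared `γ`-dependent norm `‖u‖²_{H^s(γ)}`. -/
def HsGammaNormSq {n : ℕ} (s : ℝ) (γ u : ℝ → En n) : ℝ :=
  innerL2g γ u u + innerH1g γ u u + gagGammaSq s γ u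

/-- The `γ`-dependent norm `‖u‖_{H^s(γ)}`. -/
def HsGammaNorm {n : ℕ} (s : ℝ) (γ u : ℝ → En n) : ℝ := Real.sqrt (HsGammaNormSq s γ u)

/-- The bilinear form `B¹_γ`. -/
def B1 {n : ℕ} (s : ℝ) (γ u v : ℝ → En n) : ℝ :=
  ∫ x in I01, ∫ y in I01, ⟪Rop s γ u x y, Rop s γ v x y⟫ * muW γ x y

/-- The bilinear form `B²_γ`. -/
def B2 {n : ℕ} (s : ℝ) (γ u v : ℝ → En n) : ℝ :=
  ∫ x in I01, ∫ y in I01,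
    ‖Rop s γ γ x y‖ ^ 2 * (⟪u y - u x, v y - v x⟫ / ‖γ y - γ x‖ ^ 2) * muW γ x y

/-- The bilinear form `B³_γ`. -/
def B3 {n : ℕ} (s : ℝ) (γ u v : ℝ → En n) : ℝ :=
  ∫ x in I01, ∫ y in I01,
    ‖Rop s γ γ x y‖ ^ 2 * (⟪Dg γ u x, Dg γ v x⟫ + ⟪Dg γ u y, Dg γ v y⟫) * muW γ x y

/-- The Riemannian metric `G_γ(u,v)`. -/
def Gmet {n : ℕ} (s : ℝ) (γ u v : ℝ → En n) : ℝ :=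
  2 * B1 s γ u v + (2 * s + 1) * B2 s γ u v + B3 s γ u v + innerH1g γ u v + innerL2g γ u v

/-- The distortion `distor(γ) = sup_{x ≠ y} d_γ(x,y)/|γ(y) − γ(x)|`, valued in `[0,∞]`. -/
def distorE {n : ℕ} (γ : ℝ → En n) : ℝ≥0∞ :=
  ⨆ (x ∈ I01) (y ∈ I01) (_ : x ≠ y), ENNReal.ofReal (arcDist γ x y / ‖γ y - γ x‖)

/-- The distortion, real-valued. -/
def distor {n : ℕ} (γ : ℝ → En n) : ℝ := (distorE γ).toReal

/-- A `C¹` path `[0,1] → 𝓜 ⊂ H^s(𝕋,ℝⁿ)` (with respect to the `H^s` topology), recorded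
together with its velocity field `V`. -/
structure C1Path (s : ℝ) (n : ℕ) where
  Γ : ℝ → ℝ → En n
  V : ℝ → ℝ → En n
  mem : ∀ t ∈ Set.Icc (0 : ℝ) 1, InM s (Γ t)
  memV : ∀ t ∈ Set.Icc (0 : ℝ) 1, InHs s (V t)
  isDeriv : ∀ t ∈ Set.Icc (0 : ℝ) 1,
    Tendsto (fun h : ℝ => HsNorm s fun x => h⁻¹ • (Γ (t + h) x - Γ t x) - V t x)
      (𝓝[{h : ℝ | t + h ∈ Set.Icc (0 : ℝ) 1 ∧ h ≠ 0}] 0) (𝓝 0)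
  contV : ∀ t ∈ Set.Icc (0 : ℝ) 1,
    Tendsto (fun τ : ℝ => HsNorm s fun x => V τ x - V t x) (𝓝[Set.Icc (0 : ℝ) 1] t) (𝓝 0)

/-- Length of a path with respect to `G`. -/
def pathLen {s : ℝ} {n : ℕ} (P : C1Path s n) : ℝ :=
  ∫ t in (0 : ℝ)..1, Real.sqrt (Gmet s (P.Γ t) (P.V t) (P.V t))

/-- The path (Dirichlet) energy of a path with respect to `G`. -/
def pathEnergy {s : ℝ} {n : ℕ} (P : C1Path s n) : ℝ :=
  (1 / 2) * ∫ t in (0 : ℝ)..1, Gmet s (P.Γ t) (P.V t) (P.V t)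

/-- The geodesic distance induced by `G`, valued in `[0,∞]` (`∞` if there is no path). -/
def geodDist (s : ℝ) {n : ℕ} (γ₀ γ₁ : ℝ → En n) : ℝ≥0∞ :=
  ⨅ (P : C1Path s n) (_ : P.Γ 0 = γ₀ ∧ P.Γ 1 = γ₁), ENNReal.ofReal (pathLen P)

/-- `U ⊆ 𝓜` is bounded with respect to the geodesic distance `d_G`. -/
def GBounded (s : ℝ) {n : ℕ} (U : Set (ℝ → En n)) : Prop :=
  (∀ γ ∈ U, InM s γ) ∧
    ∃ γ₀, InM s γ₀ ∧ ∃ R : ℝ, ∀ γ ∈ U, geodDist s γ γ₀ ≤ ENNReal.ofReal R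

/-- Weak convergence in the Hilbert space `H^s(𝕋,ℝⁿ)`. -/
def WeakHsTendsto {n : ℕ} (s : ℝ) (γk : ℕ → ℝ → En n) (γ : ℝ → En n) : Prop :=
  ∀ v : ℝ → En n, InHs s v →
    Tendsto (fun k => HsInner s (γk k) v) atTop (𝓝 (HsInner s γ v))

/-- Directional derivative of `γ ↦ G_γ(u,v)` at `γ` in direction `w`. -/
def DGdir {n : ℕ} (s : ℝ) (γ w u v : ℝ → En n) : ℝ :=
  deriv (fun t : ℝ => Gmet s (fun x => γ x + t • w x) u v) 0

/-- `F'` is the derivative of the path `F` with respect to the `H^s` norm, on `S`. -/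
def IsHsDerivOn {n : ℕ} (s : ℝ) (F F' : ℝ → ℝ → En n) (S : Set ℝ) : Prop :=
  ∀ t ∈ S,
    Tendsto (fun h : ℝ => HsNorm s fun x => h⁻¹ • (F (t + h) x - F t x) - F' t x)
      (𝓝[{h : ℝ | t + h ∈ S ∧ h ≠ 0}] 0) (𝓝 0)

/-- The path `F` is continuous on `S` with respect to the `H^s` norm. -/
def HsContOn {n : ℕ} (s : ℝ) (F : ℝ → ℝ → En n) (S : Set ℝ) : Prop :=
  ∀ t ∈ S, Tendsto (fun τ : ℝ => HsNorm s fun x => F τ x - F t x) (𝓝[S] t) (𝓝 0)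

/-- A solution of the geodesic initial value problem on `[0,∞)`, recorded as a triple
(position `Γ`, velocity `V`, acceleration `W`); the geodesic equation
`Γ̈ + A_Γ(Γ̇)Γ̇ = 0` is expressed weakly via the Koszul formula for the
Christoffel operator `A`. -/
def GeodesicSol {n : ℕ} (s : ℝ) (γ₀ v₀ : ℝ → En n) (Γ V W : ℝ → ℝ → En n) : Prop :=
  (∀ t ∈ Set.Ici (0 : ℝ), InM s (Γ t) ∧ InHs s (V t) ∧ InHs s (W t)) ∧
  Γ 0 = γ₀ ∧ V 0 = v₀ ∧
  IsHsDerivOn s Γ V (Set.Ici 0) ∧ IsHsDerivOn s V W (Set.Ici 0) ∧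
  HsContOn s V (Set.Ici 0) ∧ HsContOn s W (Set.Ici 0) ∧
  ∀ t ∈ Set.Ici (0 : ℝ), ∀ w : ℝ → En n, InHs s w →
    Gmet s (Γ t) (W t) w + DGdir s (Γ t) (V t) (V t) w
      - (1 / 2) * DGdir s (Γ t) w (V t) (V t) = 0

lemma aux_lint_sq {Ω : Type*} [MeasurableSpace Ω] (P : Measure Ω) [IsProbabilityMeasure P]
    {h : Ω → ℝ≥0∞} (hm : AEMeasurable h P) : (∫⁻ a, h a ∂P) ^ 2 ≤ ∫⁻ a, h a ^ 2 ∂P := by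
  have := ENNReal.lintegral_mul_le_Lp_mul_Lq P (p := 2) (q := 2)
    (by constructor <;> norm_num) hm (aemeasurable_const (b := (1 : ℝ≥0∞)))
  simp only [Pi.mul_apply, mul_one, ENNReal.one_rpow, lintegral_const, measure_univ] at this
  calc (∫⁻ a, h a ∂P) ^ 2 ≤ ((∫⁻ a, h a ^ (2:ℝ) ∂P) ^ (1 / (2:ℝ))) ^ 2 := by gcongr
    _ = ∫⁻ a, h a ^ 2 ∂P := by
      rw [← ENNReal.rpow_natCast, ← ENNReal.rpow_mul]
      norm_num

lemma aux_lint_shift (f : ℝ → ℝ≥0∞) (a b x : ℝ) :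
    ∫⁻ y in Ioc (x + a) (x + b), f y = ∫⁻ h in Ioc a b, f (x + h) := by
  have := lintegral_image_eq_lintegral_abs_deriv_mul (s := Ioc a b) (f := fun h => x + h)
    (f' := fun _ => 1) measurableSet_Ioc
    (fun y _ => by simpa using (((hasDerivAt_id y).const_add x).hasDerivWithinAt))
    (fun p _ q _ h => by simpa using h) f
  rw [image_const_add_Ioc] at this
  simpa using this

lemma aux_lint_scale (f : ℝ → ℝ≥0∞) (a b θ : ℝ) (hθ : 0 < θ) :
    ENNReal.ofReal θ * ∫⁻ h in Ioc a b, f (θ * h) = ∫⁻ y in Ioc (θ * a) (θ * b), f y := by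
  have := lintegral_image_eq_lintegral_abs_deriv_mul (s := Ioc a b) (f := fun h => θ * h)
    (f' := fun _ => θ) measurableSet_Ioc
    (fun y _ => by simpa using (((hasDerivAt_id y).const_mul θ).hasDerivWithinAt))
    (fun p _ q _ h => by simpa [hθ.ne'] using h) f
  rw [image_mul_left_Ioc hθ] at this
  rw [this, abs_of_pos hθ, lintegral_const_mul' _ _ ENNReal.ofReal_ne_top]

lemma aux_per_int {β : Type*} {f : ℝ → β} (hf : Function.Periodic f 1) (x : ℝ) (k : ℤ) :
    f (x + k) = f x := by
  simpa using hf.int_mul k x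

lemma aux_lint_per {f : ℝ → ℝ≥0∞} (hf : Function.Periodic f 1) (a : ℝ) :
    ∫⁻ y in Ioc a (a + 1), f y = ∫⁻ y in I01, f y := by
  have h0 : ∫⁻ y in I01, f y = ∫⁻ y in Ioc (0:ℝ) (0 + 1), f y := by
    unfold I01
    rw [restrict_Ico_eq_restrict_Ioc]; simp
  rw [h0]
  have hinv : VAddInvariantMeasure (AddSubgroup.zmultiples (1:ℝ)) ℝ volume :=
    ⟨fun c s _ => measure_preimage_add _ _ _⟩
  refine (isAddFundamentalDomain_Ioc one_pos a).setLIntegral_eq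
    (isAddFundamentalDomain_Ioc one_pos 0) f ?_
  rintro ⟨g, hg⟩ x
  obtain ⟨k, rfl⟩ := AddSubgroup.mem_zmultiples_iff.1 hg
  show f (k • (1:ℝ) + x) = f x
  rw [add_comm]
  simpa using aux_per_int hf x k

/-- sub-square of a unit square: bounded by the full periodic double integral -/
lemma aux_lint2_per {f : ℝ → ℝ → ℝ≥0∞} (h1 : ∀ x, Function.Periodic (f x) 1)
    (h2 : ∀ y, Function.Periodic (fun x => f x y) 1) (a c d : ℝ) (hc : a ≤ c) (hd : d ≤ a + 1) :
    ∫⁻ x in Icc c d, ∫⁻ y in Icc c d, f x y ≤ ∫⁻ x in I01, ∫⁻ y in I01, f x y := by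
  have hr : (volume : Measure ℝ).restrict (Icc c d) ≤ volume.restrict (Ioc a (a+1)) := by
    rw [← restrict_Ioc_eq_restrict_Icc]
    exact Measure.restrict_mono (Ioc_subset_Ioc hc hd) le_rfl
  calc ∫⁻ x in Icc c d, ∫⁻ y in Icc c d, f x y
      ≤ ∫⁻ x in Ioc a (a+1), ∫⁻ y in Ioc a (a+1), f x y := by
        refine lintegral_mono' hr (fun x => lintegral_mono' hr le_rfl)
    _ = ∫⁻ x in Ioc a (a+1), ∫⁻ y in I01, f x y := by
        simp_rw [aux_lint_per (h1 _)]
    _ = _ := aux_lint_per (f := fun x => ∫⁻ y in I01, f x y)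
        (fun x => by
          show ∫⁻ y in I01, f (x+1) y = ∫⁻ y in I01, f x y
          congr 1; ext y; exact h2 y x) a

lemma aux_bochner {f : ℝ → ℝ → ℝ} (hm : Measurable (Function.uncurry f))
    (h0 : ∀ x y, 0 ≤ f x y)
    (hfin : ∫⁻ x in I01, ∫⁻ y in I01, ENNReal.ofReal (f x y) < ⊤) :
    ENNReal.ofReal (∫ x in I01, ∫ y in I01, f x y) =
      ∫⁻ x in I01, ∫⁻ y in I01, ENNReal.ofReal (f x y) := by
  have hme : Measurable (fun x => ∫⁻ y in I01, ENNReal.ofReal (f x y)) :=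
    Measurable.lintegral_prod_right (f := fun x y => ENNReal.ofReal (f x y))
      hm.ennreal_ofReal
  have h1 : ∀ x, ∫ y in I01, f x y = (∫⁻ y in I01, ENNReal.ofReal (f x y)).toReal := fun x =>
    integral_eq_lintegral_of_nonneg_ae (Eventually.of_forall (h0 x))
      (hm.of_uncurry_left).aestronglyMeasurable
  simp_rw [h1]
  rw [integral_toReal hme.aemeasurable (ae_lt_top hme hfin.ne), ENNReal.ofReal_toReal hfin.ne]

lemma aux_swap {f : ℝ → ℝ → ℝ≥0∞} (hm : Measurable (Function.uncurry f)) :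
    ∫⁻ x in I01, ∫⁻ y in I01, f y x = ∫⁻ x in I01, ∫⁻ y in I01, f x y := 
  (lintegral_lintegral_swap (μ := volume.restrict I01) (ν := volume.restrict I01)
    hm.aemeasurable).symm

lemma aux_avg_diff {E : Type*} [NormedAddCommGroup E] [NormedSpace ℝ E] [CompleteSpace E]
    (P Q : Measure ℝ) [IsProbabilityMeasure P] [IsProbabilityMeasure Q] {f : ℝ → E}
    (hP : Integrable f P) (hQ : Integrable f Q) :
    ‖∫ p, f p ∂P - ∫ q, f q ∂Q‖ₑ ≤ ∫⁻ p, ∫⁻ q, ‖f p - f q‖ₑ ∂Q ∂P := by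
  have h1 : ∫ p, f p ∂P - ∫ q, f q ∂Q = ∫ p, (f p - ∫ q, f q ∂Q) ∂P := by
    rw [integral_sub hP (integrable_const _)]; simp
  rw [h1]
  refine (enorm_integral_le_lintegral_enorm _).trans (lintegral_mono fun p => ?_)
  have h2 : f p - ∫ q, f q ∂Q = ∫ q, (f p - f q) ∂Q := by
    rw [integral_sub (integrable_const _) hQ]; simp
  rw [h2]
  exact enorm_integral_le_lintegral_enorm _

/-- abstract Morrey-type estimate along a shrinking family of sets -/
lemma aux_morrey {E : Type*} [NormedAddCommGroup E] [NormedSpace ℝ E] [CompleteSpace E]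
    (μ : Measure ℝ) {f : ℝ → E} (hf : Continuous f) (hf1 : ∀ x, ‖f x‖ ≤ 1) (x l α M : ℝ) (hl : 0 < l) (hα : 0 < α)
    (hM : 0 < M) (S : ℕ → Set ℝ) (hS : ∀ k, MeasurableSet (S k)) (hanti : Antitone S)
    (hμ : ∀ k, μ (S k) = ENNReal.ofReal (l * (1/2) ^ k))
    (hx : ∀ δ > 0, ∀ᶠ k in atTop, ∀ p ∈ S k, |p - x| < δ)
    (K : ℝ → ℝ → ℝ≥0∞)
    (hK : ∀ k, ∀ p ∈ S k, ∀ q ∈ S k,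
      ‖f p - f q‖ₑ ^ 2 ≤ ENNReal.ofReal ((l * (1/2) ^ k) ^ (2 * α + 2)) * K p q)
    (hE : ∫⁻ p in S 0, ∫⁻ q in S 0, K p q ∂μ ∂μ ≤ ENNReal.ofReal M) :
    ‖(∫ p, f p ∂((ENNReal.ofReal l)⁻¹ • μ.restrict (S 0))) - f x‖ ≤
      (2 * l ^ α * √M) / (1 - (1/2) ^ α) := by
  set r : ℕ → ℝ := fun k => l * (1/2) ^ k with hr
  have hrpos : ∀ k, 0 < r k := fun k => by positivity
  set P : ℕ → Measure ℝ := fun k => (ENNReal.ofReal (r k))⁻¹ • μ.restrict (S k) with hPdef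
  have hPp : ∀ k, IsProbabilityMeasure (P k) := fun k => ⟨by
    simp only [hPdef, Measure.smul_apply, Measure.restrict_apply_univ, hμ, smul_eq_mul]
    exact ENNReal.inv_mul_cancel (by simpa using hrpos k) ENNReal.ofReal_ne_top⟩
  have hint : ∀ k, Integrable f (P k) := fun k =>
    Integrable.mono' (integrable_const (1:ℝ)) hf.aestronglyMeasurable (Eventually.of_forall hf1)
  have hkey := dist_le_of_le_geometric_of_tendsto₀ ((1/2 : ℝ) ^ α) (2 * l ^ α * √M)
    (f := fun k => ∫ p, f p ∂(P k)) (Real.rpow_lt_one (by norm_num) (by norm_num) hα) ?_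
    (a := f x) ?_
  · rw [dist_eq_norm] at hkey
    simpa [hPdef, hr] using hkey
  · intro k
    rw [dist_eq_norm]
    have h1 := aux_avg_diff (P k) (P (k+1)) (hint k) (hint (k+1))
    have hmeas : Measurable (Function.uncurry fun p q => ‖f p - f q‖ₑ) := by
      have : Continuous (Function.uncurry fun p q => f p - f q) := by
        unfold Function.uncurry; fun_prop
      exact (continuous_enorm.comp this).measurable
    have h2 : ‖∫ p, f p ∂(P k) - ∫ q, f q ∂(P (k+1))‖ₑ ^ 2 ≤
        ∫⁻ p, ∫⁻ q, ‖f p - f q‖ₑ ^ 2 ∂(P (k+1)) ∂(P k) := by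
      calc _ ≤ (∫⁻ p, ∫⁻ q, ‖f p - f q‖ₑ ∂(P (k+1)) ∂(P k)) ^ 2 := by gcongr
        _ ≤ ∫⁻ p, (∫⁻ q, ‖f p - f q‖ₑ ∂(P (k+1))) ^ 2 ∂(P k) :=
            aux_lint_sq _ (Measurable.lintegral_prod_right hmeas).aemeasurable
        _ ≤ _ := lintegral_mono fun p => aux_lint_sq _ (hmeas.of_uncurry_left).aemeasurable
    have h3 : ∫⁻ p, ∫⁻ q, ‖f p - f q‖ₑ ^ 2 ∂(P (k+1)) ∂(P k) ≤
        (ENNReal.ofReal (r k))⁻¹ * ((ENNReal.ofReal (r (k+1)))⁻¹ *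
          (ENNReal.ofReal (r k ^ (2 * α + 2)) * ENNReal.ofReal M)) := by
      simp only [hPdef, lintegral_smul_measure, smul_eq_mul]
      rw [lintegral_const_mul' _ _ (ENNReal.inv_ne_top.2 (by simpa using hrpos _))]
      gcongr
      calc ∫⁻ p in S k, ∫⁻ q in S (k+1), ‖f p - f q‖ₑ ^ 2 ∂μ ∂μ
          ≤ ∫⁻ p in S k, ∫⁻ q in S k, ENNReal.ofReal (r k ^ (2 * α + 2)) * K p q ∂μ ∂μ := by
            refine setLIntegral_mono' (hS k) fun p hp => ?_
            refine (lintegral_mono_set (hanti (Nat.le_succ k))).trans ?_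
            exact setLIntegral_mono' (hS k) fun q hq => hK k p hp q hq
        _ = ENNReal.ofReal (r k ^ (2 * α + 2)) * ∫⁻ p in S k, ∫⁻ q in S k, K p q ∂μ ∂μ := by
            simp_rw [lintegral_const_mul' _ _ ENNReal.ofReal_ne_top]
        _ ≤ _ := by
            gcongr
            refine le_trans ?_ hE
            refine (lintegral_mono_set (hanti (Nat.zero_le k))).trans ?_
            exact lintegral_mono fun p => lintegral_mono_set (hanti (Nat.zero_le k))
    have h4 := h2.trans h3
    rw [← ENNReal.ofReal_inv_of_pos (hrpos _), ← ENNReal.ofReal_inv_of_pos (hrpos _),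
      ← ENNReal.ofReal_mul (by positivity), ← ENNReal.ofReal_mul (by positivity),
      ← ENNReal.ofReal_mul (by positivity), ← ofReal_norm, ← ENNReal.ofReal_pow (norm_nonneg _),
      ENNReal.ofReal_le_ofReal_iff (by positivity)] at h4
    have h5 : (r k)⁻¹ * ((r (k+1))⁻¹ * (r k ^ (2 * α + 2) * M)) = 2 * (r k ^ α) ^ 2 * M := by
      have : r (k+1) = r k / 2 := by simp only [hr, pow_succ]; ring
      rw [this, Real.rpow_add (hrpos k), ← Real.rpow_natCast (r k ^ α), ← Real.rpow_mul (hrpos k).le]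
      have := (hrpos k).ne'
      norm_num
      rw [mul_comm α 2]
      field_simp
    have h6 : l ^ α * ((1/2 : ℝ) ^ α) ^ k = r k ^ α := by
      simp only [hr]
      rw [Real.mul_rpow hl.le (by positivity), ← Real.rpow_natCast, ← Real.rpow_natCast,
        ← Real.rpow_mul (by norm_num), ← Real.rpow_mul (by norm_num), mul_comm α]
    have h7 : 2 * l ^ α * √M * ((1/2 : ℝ) ^ α) ^ k = 2 * r k ^ α * √M := by rw [← h6]; ring
    rw [h7]
    refine (sq_le_sq₀ (norm_nonneg _) (by positivity)).1 ?_
    rw [h5] at h4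
    rw [mul_pow, mul_pow, Real.sq_sqrt hM.le]
    refine h4.trans ?_
    have : 0 ≤ (r k ^ α)^2 * M := by positivity
    nlinarith
  · rw [Metric.tendsto_atTop']
    intro ε hε
    obtain ⟨δ, hδ, hδ'⟩ := Metric.continuous_iff.1 hf x (ε/2) (by positivity)
    obtain ⟨N, hN⟩ := eventually_atTop.1 (hx δ hδ)
    refine ⟨N, fun k hk => ?_⟩
    have e1 : ∫ p, f p ∂(P k) - f x = ∫ p, (f p - f x) ∂(P k) := by
      rw [integral_sub (hint k) (integrable_const _)]; simp
    rw [dist_eq_norm, e1]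
    have hae : ∀ᵐ p ∂(P k), ‖f p - f x‖ ≤ ε / 2 := by
      apply Measure.ae_smul_measure
      filter_upwards [ae_restrict_mem (hS k)] with p hp
      have := hδ' p (by rw [Real.dist_eq]; exact hN k hk.le p hp)
      rw [dist_eq_norm] at this
      exact this.le
    have := norm_integral_le_of_norm_le_const hae
    simp at this
    linarith
section geom
variable {n : ℕ} {s : ℝ} {γ u : ℝ → En n}

lemma InHs.cont (h : InHs s u) : Continuous u := h.2.1.continuous
lemma InHs.contd (h : InHs s u) : Continuous (deriv u) := h.2.1.continuous_deriv le_rfl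
lemma InHs.hd (h : InHs s u) (x : ℝ) : HasDerivAt u (deriv u x) x :=
  (h.2.1.differentiable (by norm_num) x).hasDerivAt
lemma InHs.perd (h : InHs s u) : Function.Periodic (deriv u) 1 := by
  intro x
  have := deriv_comp_add_const (f := u) (a := 1) (x := x)
  rw [← this]
  congr 1
  exact funext h.1

lemma InM.vpos (h : InM s γ) (x : ℝ) : 0 < ‖deriv γ x‖ := norm_pos_iff.2 (h.2.2 x)

lemma InM.norm_T (h : InM s γ) (x : ℝ) : ‖Dg γ γ x‖ = 1 := by
  have := h.vpos x
  rw [Dg, norm_smul, norm_inv, norm_norm, inv_mul_cancel₀ this.ne']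

lemma InM.cont_Dg (h : InM s γ) (hu : InHs s u) : Continuous (Dg γ u) := by
  have h1 := h.1.contd
  have h2 := hu.contd
  exact (h1.norm.inv₀ fun x => (h.vpos x).ne').smul h2

lemma InM.per_Dg (h : InM s γ) (hu : InHs s u) : Function.Periodic (Dg γ u) 1 := fun x => by
  simp only [Dg, h.1.perd x, hu.perd x]

lemma InM.deriv_eq (h : InM s γ) (x : ℝ) : deriv u x = ‖deriv γ x‖ • Dg γ u x := by
  rw [Dg, smul_smul, mul_inv_cancel₀ (h.vpos x).ne', one_smul]

lemma DDg_eq (x : ℝ) (w : En n) : DDg γ u x w = ⟪Dg γ γ x, w⟫ • Dg γ u x := by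
  simp only [DDg, Dg, inner_smul_left, smul_smul]
  congr 1
  simp
  ring

/-- primitive of the speed -/
def phi (γ : ℝ → En n) (t : ℝ) : ℝ := ∫ r in (0:ℝ)..t, ‖deriv γ r‖

lemma phi_sub (h : InM s γ) (x z : ℝ) : ∫ t in x..z, ‖deriv γ t‖ = phi γ z - phi γ x := by
  have hc := h.1.contd.norm
  rw [phi, phi, intervalIntegral.integral_interval_sub_left] <;>
    exact hc.intervalIntegrable _ _

lemma phi_deriv (h : InM s γ) (x : ℝ) : HasDerivAt (phi γ) ‖deriv γ x‖ x :=
  intervalIntegral.integral_hasDerivAt_right (h.1.contd.norm.intervalIntegrable _ _)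
    (h.1.contd.norm.stronglyMeasurableAtFilter _ _) h.1.contd.norm.continuousAt

lemma phi_cont (h : InM s γ) : Continuous (phi γ) :=
  continuous_iff_continuousAt.2 fun x => (phi_deriv h x).continuousAt

lemma phi_mono (h : InM s γ) : StrictMono (phi γ) :=
  strictMono_of_deriv_pos fun x => by rw [(phi_deriv h x).deriv]; exact h.vpos x

lemma ftc (hu : InHs s u) (x z : ℝ) : u z - u x = ∫ t in x..z, deriv u t :=
  (intervalIntegral.integral_deriv_eq_sub (fun t _ => (hu.hd t).differentiableAt)
    (hu.contd.intervalIntegrable _ _)).symm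

lemma chord_le' (h : InM s γ) (x z : ℝ) :
    ‖γ z - γ x‖ ≤ |∫ t in x..z, ‖deriv γ t‖| := by
  rw [ftc h.1]
  exact intervalIntegral.norm_integral_le_abs_integral_norm

lemma chord_le (h : InM s γ) {x z : ℝ} (hxz : x ≤ z) : ‖γ z - γ x‖ ≤ phi γ z - phi γ x := by
  have := chord_le' h x z
  rwa [phi_sub h, abs_of_nonneg (sub_nonneg.2 ((phi_mono h).monotone hxz))] at this

lemma inner_chord (h : InM s γ) (w : En n) {x z : ℝ} (hxz : x ≤ z)
    (hw : ∀ t ∈ Icc x z, 1 / 2 ≤ ⟪w, Dg γ γ t⟫) :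
    (1/2) * (phi γ z - phi γ x) ≤ ⟪w, γ z - γ x⟫ := by
  have hc := h.1.contd
  rw [ftc h.1, ← phi_sub h]
  have e : ⟪w, ∫ t in x..z, deriv γ t⟫ = ∫ t in x..z, ⟪w, deriv γ t⟫ := by
    have := (innerSL ℝ w).intervalIntegral_comp_comm (hc.intervalIntegrable (μ := volume) x z)
    simpa using this.symm
  rw [e, ← intervalIntegral.integral_const_mul]
  refine intervalIntegral.integral_mono_on hxz ?_ ?_ fun t ht => ?_
  · exact (continuous_const.mul hc.norm).intervalIntegrable _ _
  · exact (Continuous.inner continuous_const hc).intervalIntegrable _ _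
  · rw [h.deriv_eq (u := γ) t, inner_smul_right, norm_smul, norm_norm, h.norm_T, mul_one, mul_comm]
    exact mul_le_mul_of_nonneg_left (hw t ht) (norm_nonneg _)

lemma inner_of_norm_le {E : Type*} [NormedAddCommGroup E] [InnerProductSpace ℝ E] {a b : E}
    (ha : ‖a‖ = 1) (hb : ‖b‖ = 1)
    (hab : ‖a - b‖ ≤ 1) : 1 / 2 ≤ ⟪a, b⟫ := by
  have := norm_sub_sq_real a b
  rw [ha, hb] at this
  nlinarith [norm_nonneg (a - b)]

lemma proj_sq {E : Type*} [NormedAddCommGroup E] [InnerProductSpace ℝ E] {T D : E} (hT : ‖T‖ = 1) : ‖D - ⟪T, D⟫ • T‖ ^ 2 = ‖D‖ ^ 2 - ⟪T, D⟫ ^ 2 := by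
  rw [norm_sub_sq_real, inner_smul_right, norm_smul, hT, real_inner_comm]
  simp
  ring

lemma pt_tan {E : Type*} [NormedAddCommGroup E] [InnerProductSpace ℝ E] {P Q D : E} (hP : ‖P‖ = 1) (hQ : ‖Q‖ = 1) (hp : 0 ≤ ⟪P, D⟫) (hq : 0 ≤ ⟪Q, D⟫) :
    ‖D‖ ^ 2 * ‖P - Q‖ ^ 2 ≤ 4 * (‖D - ⟪P, D⟫ • P‖ ^ 2 + ‖D - ⟪Q, D⟫ • Q‖ ^ 2) := by
  have key : ∀ {P : E}, ‖P‖ = 1 → 0 ≤ ⟪P, D⟫ →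
      ‖‖D‖ • P - D‖ ^ 2 ≤ 2 * ‖D - ⟪P, D⟫ • P‖ ^ 2 := by
    intro P hP hp
    rw [proj_sq hP, norm_sub_sq_real, inner_smul_left, norm_smul, hP]
    have : ⟪P, D⟫ ≤ ‖D‖ := by simpa [hP] using real_inner_le_norm P D
    simp
    nlinarith
  have h1 := key hP hp
  have h2 := key hQ hq
  have e : ‖D‖ ^ 2 * ‖P - Q‖ ^ 2 = ‖(‖D‖ • P - D) - (‖D‖ • Q - D)‖ ^ 2 := by
    rw [show (‖D‖ • P - D) - (‖D‖ • Q - D) = ‖D‖ • (P - Q) by module, norm_smul, norm_norm, mul_pow]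
  rw [e]
  have := norm_sub_le (‖D‖ • P - D) (‖D‖ • Q - D)
  nlinarith [norm_nonneg (‖D‖ • P - D), norm_nonneg (‖D‖ • Q - D),
    norm_nonneg ((‖D‖ • P - D) - (‖D‖ • Q - D)), sq_nonneg (‖(‖D‖ • P - D)‖ - ‖(‖D‖ • Q - D)‖)]

lemma pt_near {E : Type*} [NormedAddCommGroup E] [InnerProductSpace ℝ E] {P Q D U p q : E} (hP : ‖P‖ = 1) (hQ : ‖Q‖ = 1) (hD : 0 < ‖D‖)
    (hAB : (‖D‖ / 2 ≤ ⟪P, D⟫ ∧ ‖D‖ / 2 ≤ ⟪Q, D⟫) ∨ (⟪P, D⟫ ≤ -(‖D‖ / 2) ∧ ⟪Q, D⟫ ≤ -(‖D‖ / 2))) :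
    ‖D‖ ^ 2 * ‖q - p‖ ^ 2 ≤ 16 * (‖U - ⟪P, D⟫ • p‖ ^ 2 + ‖U - ⟪Q, D⟫ • q‖ ^ 2)
      + 32 * (‖U‖ ^ 2 / ‖D‖ ^ 2) * (‖D - ⟪P, D⟫ • P‖ ^ 2 + ‖D - ⟪Q, D⟫ • Q‖ ^ 2) := by
  rw [proj_sq hP, proj_sq hQ]
  have hA1 : |⟪P, D⟫| ≤ ‖D‖ := by simpa [hP] using abs_real_inner_le_norm P D
  have hB1 : |⟪Q, D⟫| ≤ ‖D‖ := by simpa [hQ] using abs_real_inner_le_norm Q D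
  generalize ⟪P, D⟫ = A at *
  generalize ⟪Q, D⟫ = B at *
  generalize ‖D‖ = r at *
  rw [abs_le] at hA1 hB1
  have hA0 : A ≠ 0 := by rcases hAB with h | h <;> intro h0 <;> linarith [h.1, h.2]
  have hB0 : B ≠ 0 := by rcases hAB with h | h <;> intro h0 <;> linarith [h.1, h.2]
  have hA2 : r ^ 2 / 4 ≤ A ^ 2 := by rcases hAB with h | h <;> nlinarith [h.1, h.2]
  have hB2 : r ^ 2 / 4 ≤ B ^ 2 := by rcases hAB with h | h <;> nlinarith [h.1, h.2]
  have hdiff : (A - B) ^ 2 ≤ (r ^ 2 - A ^ 2) + (r ^ 2 - B ^ 2) := by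
    rcases hAB with h | h
    · nlinarith [mul_nonneg (by linarith [h.1] : 0 ≤ A) (by linarith [h.2] : 0 ≤ B), mul_nonneg (by linarith [h.1] : 0 ≤ A) (by linarith : 0 ≤ r - A), mul_nonneg (by linarith [h.2] : 0 ≤ B) (by linarith : 0 ≤ r - B), mul_nonneg (by linarith : 0 ≤ r - A) (by linarith : 0 ≤ r - B)]
    · nlinarith [mul_nonneg (by linarith [h.1] : 0 ≤ -A) (by linarith [h.2] : 0 ≤ -B), mul_nonneg (by linarith [h.1] : 0 ≤ -A) (by linarith : 0 ≤ r + A), mul_nonneg (by linarith [h.2] : 0 ≤ -B) (by linarith : 0 ≤ r + B), mul_nonneg (by linarith : 0 ≤ r + A) (by linarith : 0 ≤ r + B)]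
  set X := U - A • p
  set Y := U - B • q
  have e : q - p = ((A - B) / (A * B)) • U + (A⁻¹ • X - B⁻¹ • Y) := by
    have : (A - B) / (A * B) = B⁻¹ - A⁻¹ := by field_simp
    rw [this]
    simp only [X, Y, smul_sub, sub_smul, smul_smul, inv_mul_cancel₀ hA0, inv_mul_cancel₀ hB0]
    module
  have n1 : ‖q - p‖ ^ 2 ≤ 2 * (‖((A - B) / (A * B)) • U‖ ^ 2) + 4 * (‖A⁻¹ • X‖ ^ 2 + ‖B⁻¹ • Y‖ ^ 2) := by
    rw [e]
    have a1 := norm_add_le (((A - B) / (A * B)) • U) (A⁻¹ • X - B⁻¹ • Y)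
    have a2 := norm_sub_le (A⁻¹ • X) (B⁻¹ • Y)
    have a3 := a1.trans (add_le_add_right a2 _)
    calc _ ≤ (‖((A - B) / (A * B)) • U‖ + (‖A⁻¹ • X‖ + ‖B⁻¹ • Y‖)) ^ 2 := by gcongr
      _ ≤ _ := by
        nlinarith [sq_nonneg (‖((A - B) / (A * B)) • U‖ - (‖A⁻¹ • X‖ + ‖B⁻¹ • Y‖)), sq_nonneg (‖A⁻¹ • X‖ - ‖B⁻¹ • Y‖)]
  simp only [norm_smul, mul_pow, Real.norm_eq_abs, sq_abs, inv_pow, div_pow] at n1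
  have hA3 : (A ^ 2)⁻¹ ≤ 4 / r ^ 2 := by
    rw [inv_le_comm₀ (by positivity) (by positivity), inv_div]; exact hA2
  have hB3 : (B ^ 2)⁻¹ ≤ 4 / r ^ 2 := by
    rw [inv_le_comm₀ (by positivity) (by positivity), inv_div]; exact hB2
  have hAB3 : (A - B) ^ 2 / (A ^ 2 * B ^ 2) ≤ 16 / r ^ 4 * ((r ^ 2 - A ^ 2) + (r ^ 2 - B ^ 2)) := by
    calc _ = (A - B) ^ 2 * ((A ^ 2)⁻¹ * (B ^ 2)⁻¹) := by field_simp
      _ ≤ ((r ^ 2 - A ^ 2) + (r ^ 2 - B ^ 2)) * ((4 / r ^ 2) * (4 / r ^ 2)) := by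
        have : 0 ≤ (r ^ 2 - A ^ 2) + (r ^ 2 - B ^ 2) := le_trans (sq_nonneg _) hdiff
        gcongr
      _ = _ := by field_simp; ring
  calc r ^ 2 * ‖q - p‖ ^ 2 ≤ r ^ 2 * (2 * ((16 / r ^ 4 * ((r ^ 2 - A ^ 2) + (r ^ 2 - B ^ 2))) * ‖U‖ ^ 2) + 4 * (4 / r ^ 2 * ‖X‖ ^ 2 + 4 / r ^ 2 * ‖Y‖ ^ 2)) := by
        gcongr
        refine n1.trans ?_
        gcongr
    _ = _ := by field_simp; ring

lemma Rop_mu (x y : ℝ) (hr : 0 < ‖γ y - γ x‖) :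
    ‖Rop s γ u x y‖ ^ 2 * muW γ x y =
      ‖(u y - u x) - ⟪Dg γ γ x, γ y - γ x⟫ • Dg γ u x‖ ^ 2 / ‖γ y - γ x‖ ^ (2 * s + 1) *
        (‖deriv γ x‖ * ‖deriv γ y‖) := by
  rw [Rop, DDg_eq, muW, norm_smul, mul_pow, norm_inv, Real.norm_of_nonneg (by positivity),
    Real.rpow_add hr, mul_comm 2 s, Real.rpow_mul hr.le]
  simp only [Real.rpow_one, Real.rpow_ofNat]
  field_simp

lemma Rop_mu' (x y : ℝ) (hr : 0 < ‖γ y - γ x‖) :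
    ‖Rop s γ u y x‖ ^ 2 * muW γ y x =
      ‖(u y - u x) - ⟪Dg γ γ y, γ y - γ x⟫ • Dg γ u y‖ ^ 2 / ‖γ y - γ x‖ ^ (2 * s + 1) *
        (‖deriv γ x‖ * ‖deriv γ y‖) := by
  rw [Rop_mu y x (by rwa [norm_sub_rev]), norm_sub_rev (γ x) (γ y), mul_comm ‖deriv γ y‖]
  congr 3
  rw [← norm_neg]
  congr 1
  rw [← neg_sub (γ y) (γ x), inner_neg_right]
  module

lemma meas_Rop (h : InM s γ) (hu : InHs s u) : Measurable (Function.uncurry (Rop s γ u)) := by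
  have h1 := h.1.cont.measurable
  have h2 := h.1.contd.measurable
  have h3 := hu.cont.measurable
  have h4 := hu.contd.measurable
  unfold Function.uncurry Rop DDg
  fun_prop

lemma meas_mu (h : InM s γ) : Measurable (Function.uncurry (muW γ)) := by
  have h1 := h.1.cont.measurable
  have h2 := h.1.contd.measurable
  unfold Function.uncurry muW
  fun_prop

lemma mu_nonneg (x y : ℝ) : 0 ≤ muW γ x y := by unfold muW; positivity

lemma meas_f1 (h : InM s γ) (hu : InHs s u) :
    Measurable (Function.uncurry fun x y => ‖Rop s γ u x y‖ ^ 2 * muW γ x y) :=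
  ((meas_Rop h hu).norm.pow_const 2).mul (meas_mu h)

lemma per_f1 (h : InM s γ) (hu : InHs s u) (x : ℝ) :
    Function.Periodic (fun y => ‖Rop s γ u x y‖ ^ 2 * muW γ x y) 1 := fun y => by
  simp only [Rop, DDg, muW, h.1.1 y, hu.1 y, h.1.perd y]

lemma per_f1' (h : InM s γ) (hu : InHs s u) (y : ℝ) :
    Function.Periodic (fun x => ‖Rop s γ u x y‖ ^ 2 * muW γ x y) 1 := fun x => by
  simp only [Rop, DDg, muW, h.1.1 x, hu.1 x, h.1.perd x, hu.perd x]

end geom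

section key
variable {n : ℕ} {s : ℝ} {γ u : ℝ → En n}

def omg (γ : ℝ → En n) : Measure ℝ := volume.withDensity fun t => ENNReal.ofReal ‖deriv γ t‖

lemma omg_Icc (h : InM s γ) {a b : ℝ} (hab : a ≤ b) :
    omg γ (Icc a b) = ENNReal.ofReal (phi γ b - phi γ a) := by
  have hc := h.1.contd.norm
  rw [omg, withDensity_apply _ measurableSet_Icc, ← phi_sub h, intervalIntegral.integral_of_le hab,
    ← integral_Icc_eq_integral_Ioc, ofReal_integral_eq_lintegral_ofReal]
  · exact hc.integrableOn_Icc
  · exact Eventually.of_forall fun x => norm_nonneg _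

def Kk (s : ℝ) (γ : ℝ → En n) (p q : ℝ) : ℝ≥0∞ :=
  ENNReal.ofReal (4 * (‖Rop s γ γ p q‖ ^ 2 + ‖Rop s γ γ q p‖ ^ 2) / ‖γ q - γ p‖)

lemma Kk_symm (p q : ℝ) : Kk s γ p q = Kk s γ q p := by
  unfold Kk
  rw [norm_sub_rev, add_comm]

lemma Kk_meas_aux {F : ℝ → ℝ → En n} {g : ℝ → ℝ → ℝ} (h1 : Measurable (Function.uncurry F))
    (h4 : Measurable (Function.uncurry g)) :
    Measurable (Function.uncurry fun p q =>
      ENNReal.ofReal (4 * (‖F p q‖ ^ 2 + ‖F q p‖ ^ 2) / g p q)) := by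
  have h2 : Measurable (Function.uncurry fun x y => F y x) := h1.comp measurable_swap
  exact ((((h1.norm.pow_const 2).add (h2.norm.pow_const 2)).const_mul 4).div h4).ennreal_ofReal

lemma Kk_meas (h : InM s γ) : Measurable (Function.uncurry (Kk s γ)) := by
  have h3 := h.1.cont.measurable
  refine Kk_meas_aux (g := fun p q => ‖γ q - γ p‖) (meas_Rop h h.1) ?_
  unfold Function.uncurry
  fun_prop

lemma osc_chord (h : InM s γ) {p q : ℝ} (hpq : p ≤ q)
    (hosc : ∀ a b, p ≤ a → a ≤ b → b ≤ q → ‖Dg γ γ a - Dg γ γ b‖ ≤ 1) :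
    (1/2) * (phi γ q - phi γ p) ≤ ⟪Dg γ γ p, γ q - γ p⟫ ∧
    (1/2) * (phi γ q - phi γ p) ≤ ⟪Dg γ γ q, γ q - γ p⟫ := by
  constructor
  · refine inner_chord h _ hpq fun t ht => ?_
    exact inner_of_norm_le (h.norm_T _) (h.norm_T _) (hosc p t le_rfl ht.1 ht.2)
  · refine inner_chord h _ hpq fun t ht => ?_
    refine inner_of_norm_le (h.norm_T _) (h.norm_T _) ?_
    rw [norm_sub_rev]
    exact hosc t q ht.1 ht.2 le_rfl

lemma Kk_bound (h : InM s γ) (hs : s ∈ Set.Ioo (3 / 2 : ℝ) 2) {p q ρ : ℝ} (hpq : p ≤ q)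
    (hρ : phi γ q - phi γ p ≤ ρ)
    (hosc : ∀ a b, p ≤ a → a ≤ b → b ≤ q → ‖Dg γ γ a - Dg γ γ b‖ ≤ 1) :
    ‖Dg γ γ p - Dg γ γ q‖ₑ ^ 2 ≤ ENNReal.ofReal (ρ ^ (2 * (s - 3/2) + 2)) * Kk s γ p q := by
  rcases hpq.eq_or_lt with rfl | hlt
  · simp
  obtain ⟨h1, h2⟩ := osc_chord h hpq hosc
  have hphi : 0 < phi γ q - phi γ p := sub_pos.2 (phi_mono h hlt)
  have hr : 0 < ‖γ q - γ p‖ := by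
    rw [norm_pos_iff]
    intro h0
    rw [h0] at h1
    simp at h1
    linarith
  have h3 := pt_tan (h.norm_T p) (h.norm_T q) (by linarith) (by linarith : 0 ≤ ⟪Dg γ γ q, γ q - γ p⟫)
  have hrρ : ‖γ q - γ p‖ ≤ ρ := (chord_le h hpq).trans hρ
  rw [Kk, ← ofReal_norm, ← ENNReal.ofReal_pow (norm_nonneg _), ← ENNReal.ofReal_mul (Real.rpow_nonneg (hr.le.trans hrρ) _)]
  apply ENNReal.ofReal_le_ofReal
  have e1 := Rop_mu (s := s) (u := γ) p q hr
  have e2 := Rop_mu' (s := s) (u := γ) p q hr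
  have vp := h.vpos p
  have vq := h.vpos q
  simp only [muW, norm_sub_rev (γ p) (γ q), mul_comm ‖deriv γ q‖ ‖deriv γ p‖] at e1 e2
  set A := ‖γ q - γ p - ⟪Dg γ γ p, γ q - γ p⟫ • Dg γ γ p‖ ^ 2
  set B := ‖γ q - γ p - ⟪Dg γ γ q, γ q - γ p⟫ • Dg γ γ q‖ ^ 2
  set r := ‖γ q - γ p‖
  have e1' : ‖Rop s γ γ p q‖ ^ 2 / r = A / r ^ (2 * s + 1) := by
    refine mul_right_cancel₀ (mul_pos vp vq).ne' ?_
    rw [← e1]; ring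
  have e2' : ‖Rop s γ γ q p‖ ^ 2 / r = B / r ^ (2 * s + 1) := by
    refine mul_right_cancel₀ (mul_pos vp vq).ne' ?_
    rw [← e2]; ring
  have e3 : 4 * (‖Rop s γ γ p q‖ ^ 2 + ‖Rop s γ γ q p‖ ^ 2) / r = 4 * (A + B) / r ^ (2 * s + 1) := by
    rw [mul_div_assoc, add_div, e1', e2']; ring
  have e4 : r ^ (2 * s + 1) = r ^ (2 * (s - 3/2) + 2) * r ^ 2 := by
    rw [← Real.rpow_natCast r 2, ← Real.rpow_add hr]
    congr 1; push_cast; ring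
  rw [e3]
  calc ‖Dg γ γ p - Dg γ γ q‖ ^ 2 ≤ 4 * (A + B) / r ^ 2 := by
        rw [le_div_iff₀ (by positivity)]; linarith
    _ = r ^ (2 * (s - 3/2) + 2) * (4 * (A + B) / r ^ (2 * s + 1)) := by
        rw [e4]
        have : r ^ (2 * (s - 3/2) + 2) ≠ 0 := by positivity
        field_simp
    _ ≤ _ := by
        have : 0 ≤ 2 * (s - 3/2) + 2 := by linarith [hs.1]
        gcongr

lemma Kk_int (h : InM s γ) {c d : ℝ} (hd : d ≤ c + 1) :
    ∫⁻ p in Icc c d, ∫⁻ q in Icc c d, Kk s γ p q ∂(omg γ) ∂(omg γ) ≤ 8 * EtpE s γ := by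
  have hv : Measurable fun t => ENNReal.ofReal ‖deriv γ t‖ := h.1.contd.norm.measurable.ennreal_ofReal
  have hK := Kk_meas h
  have hin : ∀ p, ∫⁻ q in Icc c d, Kk s γ p q ∂(omg γ) =
      ∫⁻ q in Icc c d, ENNReal.ofReal ‖deriv γ q‖ * Kk s γ p q := fun p => by
    rw [omg, restrict_withDensity measurableSet_Icc, lintegral_withDensity_eq_lintegral_mul _ hv hK.of_uncurry_left]
    rfl
  have hm2 : Measurable (Function.uncurry fun p q => ENNReal.ofReal ‖deriv γ q‖ * Kk s γ p q) :=
    (hv.comp measurable_snd).mul hK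
  have hout : ∫⁻ p in Icc c d, ∫⁻ q in Icc c d, Kk s γ p q ∂(omg γ) ∂(omg γ) =
      ∫⁻ p in Icc c d, ∫⁻ q in Icc c d, ENNReal.ofReal ‖deriv γ p‖ *
        (ENNReal.ofReal ‖deriv γ q‖ * Kk s γ p q) := by
    simp_rw [hin]
    rw [omg, restrict_withDensity measurableSet_Icc, lintegral_withDensity_eq_lintegral_mul _ hv
      (Measurable.lintegral_prod_right hm2)]
    simp only [Pi.mul_apply]
    simp_rw [lintegral_const_mul' _ _ ENNReal.ofReal_ne_top]
  rw [hout]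
  set f : ℝ → ℝ → ℝ := fun x y => ‖Rop s γ γ x y‖ ^ 2 * muW γ x y
  have hf0 : ∀ x y, 0 ≤ f x y := fun x y => mul_nonneg (sq_nonneg _) (mu_nonneg _ _)
  have hfm0 : Measurable (fun z : ℝ × ℝ => f z.1 z.2) := meas_f1 h h.1
  have hEe : EtpE s γ = ∫⁻ x in I01, ∫⁻ y in I01, ENNReal.ofReal (f x y) := rfl
  have hp1 : ∀ x y, f x (y+1) = f x y := per_f1 h h.1
  have hp2 : ∀ y x, f (x+1) y = f x y := per_f1' h h.1
  have hf : ∀ x y, f x y = ‖Rop s γ γ x y‖ ^ 2 * (‖deriv γ x‖ * ‖deriv γ y‖ / ‖γ y - γ x‖) := fun _ _ => rfl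
  clear_value f
  have hfm : Measurable (Function.uncurry fun x y => ENNReal.ofReal (f x y)) := hfm0.ennreal_ofReal
  have hfm' : Measurable (Function.uncurry fun x y => ENNReal.ofReal (f y x)) := hfm.comp measurable_swap
  have hpt : ∀ p q, ENNReal.ofReal ‖deriv γ p‖ * (ENNReal.ofReal ‖deriv γ q‖ * Kk s γ p q) =
      4 * (ENNReal.ofReal (f p q) + ENNReal.ofReal (f q p)) := fun p q => by
    rw [Kk, ← ENNReal.ofReal_mul (norm_nonneg _), ← ENNReal.ofReal_mul (norm_nonneg _),
      ← ENNReal.ofReal_add (hf0 _ _) (hf0 _ _), show (4 : ℝ≥0∞) = ENNReal.ofReal 4 by simp,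
      ← ENNReal.ofReal_mul (by norm_num)]
    congr 1
    rw [hf, hf]
    rw [norm_sub_rev (γ p) (γ q)]
    ring
  simp_rw [hpt]
  refine (aux_lint2_per (f := fun p q => 4 * (ENNReal.ofReal (f p q) + ENNReal.ofReal (f q p))) ?_ ?_
    c c d le_rfl hd).trans ?_
  · intro x y
    simp only [hp1, hp2]
  · intro y x
    simp only [hp1, hp2]
  · apply le_of_eq
    have e1 : ∀ x, ∫⁻ y in I01, 4 * (ENNReal.ofReal (f x y) + ENNReal.ofReal (f y x)) =
        4 * ((∫⁻ y in I01, ENNReal.ofReal (f x y)) + ∫⁻ y in I01, ENNReal.ofReal (f y x)) := fun x => by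
      rw [lintegral_const_mul' _ _ (by norm_num), lintegral_add_left hfm.of_uncurry_left]
    rw [lintegral_congr e1]
    rw [lintegral_const_mul' _ _ (by norm_num), lintegral_add_left (Measurable.lintegral_prod_right hfm),
      aux_swap hfm]
    rw [← hEe]
    ring

lemma key_sub (h : InM s γ) (hs : s ∈ Set.Ioo (3 / 2 : ℝ) 2) (hE : EtpE s γ < ⊤) {c d M : ℝ}
    (hcd : c < d) (hd : d ≤ c + 1) (hM : 0 < M) (hEM : Etp s γ ≤ M)
    (hosc : ∀ a b, c ≤ a → a ≤ b → b ≤ d → ‖Dg γ γ a - Dg γ γ b‖ ≤ 1) :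
    ‖Dg γ γ c - Dg γ γ d‖ ≤ 2 * ((2 * (phi γ d - phi γ c) ^ (s - 3/2) * √(8 * M)) /
      (1 - (1/2) ^ (s - 3/2))) := by
  set l := phi γ d - phi γ c with hl
  have hl0 : 0 < l := sub_pos.2 (phi_mono h hcd)
  have hmono := phi_mono h
  have hT : Continuous (Dg γ γ) := h.cont_Dg h.1
  have hEint : ∫⁻ p in Icc c d, ∫⁻ q in Icc c d, Kk s γ p q ∂(omg γ) ∂(omg γ) ≤ ENNReal.ofReal (8 * M) := by
    refine (Kk_int h hd).trans ?_
    rw [ENNReal.ofReal_mul (by norm_num)]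
    gcongr
    · simp
    · rw [← ENNReal.ofReal_toReal hE.ne]
      exact ENNReal.ofReal_le_ofReal hEM
  have hKb : ∀ p q ρ, p ∈ Icc c d → q ∈ Icc c d → |phi γ q - phi γ p| ≤ ρ →
      ‖Dg γ γ p - Dg γ γ q‖ₑ ^ 2 ≤ ENNReal.ofReal (ρ ^ (2 * (s - 3/2) + 2)) * Kk s γ p q := by
    intro p q ρ hp hq hρ
    rcases le_total p q with hpq | hpq
    · exact Kk_bound h hs hpq ((le_abs_self _).trans hρ)
        fun a b ha hab hb => hosc a b (hp.1.trans ha) hab (hb.trans hq.2)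
    · rw [Kk_symm, ← enorm_neg, neg_sub]
      rw [abs_sub_comm] at hρ
      exact Kk_bound h hs hpq ((le_abs_self _).trans hρ)
        fun a b ha hab hb => hosc a b (hq.1.trans ha) hab (hb.trans hp.2)
  have hpk : ∀ k : ℕ, 0 < (1/2 : ℝ) ^ k ∧ (1/2 : ℝ) ^ k ≤ 1 := fun k =>
    ⟨by positivity, pow_le_one₀ (by norm_num) (by norm_num)⟩
  have hlk : Tendsto (fun k : ℕ => l * (1/2 : ℝ) ^ k) atTop (𝓝 0) := by
    simpa using (tendsto_pow_atTop_nhds_zero_of_lt_one (r := (1/2 : ℝ)) (by norm_num) (by norm_num)).const_mul l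
  -- left endpoint
  have hleft : ∀ k : ℕ, ∃ t ∈ Icc c d, phi γ t = phi γ c + l * (1/2) ^ k := fun k => by
    have := intermediate_value_Icc hcd.le (phi_cont h).continuousOn
    refine this ⟨?_, ?_⟩ <;> nlinarith [hpk k]
  have hright : ∀ k : ℕ, ∃ t ∈ Icc c d, phi γ t = phi γ d - l * (1/2) ^ k := fun k => by
    have := intermediate_value_Icc hcd.le (phi_cont h).continuousOn
    refine this ⟨?_, ?_⟩ <;> nlinarith [hpk k]
  choose t ht htφ using hleft
  choose t' ht' htφ' using hright
  have hpow : ∀ {j k : ℕ}, j ≤ k → (1/2 : ℝ) ^ k ≤ (1/2) ^ j := fun hjk =>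
    pow_le_pow_of_le_one (by norm_num) (by norm_num) hjk
  have ht0 : t 0 = d := hmono.injective (by rw [htφ]; simp [hl])
  have ht0' : t' 0 = c := hmono.injective (by rw [htφ']; simp [hl])
  have L := aux_morrey (omg γ) hT (fun x => (h.norm_T x).le) c l (s - 3/2) (8 * M) hl0
    (by linarith [hs.1]) (by positivity) (fun k => Icc c (t k)) (fun k => measurableSet_Icc)
    (fun j k hjk => Icc_subset_Icc le_rfl (hmono.le_iff_le.1 (by
      rw [htφ, htφ]; have := hpow hjk; nlinarith)))
    (fun k => by rw [omg_Icc h (ht k).1, htφ]; congr 1; ring)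
    (fun δ hδ => by
      have : 0 < phi γ (c + δ) - phi γ c := sub_pos.2 (hmono (by linarith))
      filter_upwards [hlk.eventually (gt_mem_nhds this)] with k hk p hp
      have : t k < c + δ := hmono.lt_iff_lt.1 (by rw [htφ]; linarith)
      rw [abs_of_nonneg (by linarith [hp.1])]
      linarith [hp.2])
    (Kk s γ)
    (fun k p hp q hq => hKb p q _ ⟨hp.1, hp.2.trans (ht k).2⟩ ⟨hq.1, hq.2.trans (ht k).2⟩ (by
      have b1 := hmono.monotone hp.1
      have b2 := hmono.monotone hp.2
      have b3 := hmono.monotone hq.1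
      have b4 := hmono.monotone hq.2
      rw [htφ] at b2 b4
      rw [abs_le]; constructor <;> linarith))
    (by simpa only [ht0] using hEint)
  have R := aux_morrey (omg γ) hT (fun x => (h.norm_T x).le) d l (s - 3/2) (8 * M) hl0
    (by linarith [hs.1]) (by positivity) (fun k => Icc (t' k) d) (fun k => measurableSet_Icc)
    (fun j k hjk => Icc_subset_Icc (hmono.le_iff_le.1 (by
      rw [htφ', htφ']; have := hpow hjk; nlinarith)) le_rfl)
    (fun k => by rw [omg_Icc h (ht' k).2, htφ']; congr 1; ring)
    (fun δ hδ => by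
      have : 0 < phi γ d - phi γ (d - δ) := sub_pos.2 (hmono (by linarith))
      filter_upwards [hlk.eventually (gt_mem_nhds this)] with k hk p hp
      have : d - δ < t' k := hmono.lt_iff_lt.1 (by rw [htφ']; linarith)
      rw [abs_of_nonpos (by linarith [hp.2])]
      linarith [hp.1])
    (Kk s γ)
    (fun k p hp q hq => hKb p q _ ⟨(ht' k).1.trans hp.1, hp.2⟩ ⟨(ht' k).1.trans hq.1, hq.2⟩ (by
      have b1 := hmono.monotone hp.1
      have b2 := hmono.monotone hp.2
      have b3 := hmono.monotone hq.1
      have b4 := hmono.monotone hq.2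
      rw [htφ'] at b1 b3
      rw [abs_le]; constructor <;> linarith))
    (by simpa only [ht0'] using hEint)
  simp only [ht0] at L
  simp only [ht0'] at R
  have := norm_sub_le_norm_sub_add_norm_sub (Dg γ γ c)
    (∫ p, Dg γ γ p ∂((ENNReal.ofReal l)⁻¹ • (omg γ).restrict (Icc c d))) (Dg γ γ d)
  rw [norm_sub_rev] at L
  linarith

lemma osc_interval (h : InM s γ) {p q : ℝ} (hpq : p ≤ q)
    (hbad : ¬ ∀ a b, p ≤ a → a ≤ b → b ≤ q → ‖Dg γ γ a - Dg γ γ b‖ ≤ 1) :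
    ∃ c d, p ≤ c ∧ c < d ∧ d ≤ q ∧ ‖Dg γ γ c - Dg γ γ d‖ = 1 ∧
      ∀ a b, c ≤ a → a ≤ b → b ≤ d → ‖Dg γ γ a - Dg γ γ b‖ ≤ 1 := by
  have hT : Continuous (Dg γ γ) := h.cont_Dg h.1
  push Not at hbad
  obtain ⟨a, b, ha, hab, hb, hlt⟩ := hbad
  set Z : Set (ℝ × ℝ) := (Icc p q ×ˢ Icc p q) ∩ {z | z.1 ≤ z.2 ∧ 1 ≤ ‖Dg γ γ z.1 - Dg γ γ z.2‖} with hZ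
  have hZc : IsCompact Z := by
    refine (isCompact_Icc.prod isCompact_Icc).inter_right ?_
    exact (isClosed_le continuous_fst continuous_snd).inter
      (isClosed_le continuous_const ((hT.comp continuous_fst).sub (hT.comp continuous_snd)).norm)
  have hZne : Z.Nonempty := ⟨(a, b), ⟨⟨⟨ha, hab.trans hb⟩, ⟨ha.trans hab, hb⟩⟩, hab, hlt.le⟩⟩
  obtain ⟨⟨c, d⟩, hcdZ, hmin⟩ := hZc.exists_isMinOn hZne
    (f := fun z : ℝ × ℝ => z.2 - z.1) (by fun_prop)
  obtain ⟨⟨⟨hc1, hc2⟩, ⟨hd1, hd2⟩⟩, hcd, hcd1⟩ := hcdZ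
  simp only at hc1 hc2 hd1 hd2 hcd hcd1
  have hmin' : ∀ a b, c ≤ a → a ≤ b → b ≤ d → 1 ≤ ‖Dg γ γ a - Dg γ γ b‖ → a = c ∧ b = d := by
    intro a b ha hab hb h1
    have := hmin (a := (a, b)) (show (a, b) ∈ Z from
      ⟨⟨⟨hc1.trans ha, hab.trans (hb.trans hd2)⟩, ⟨hc1.trans (ha.trans hab), hb.trans hd2⟩⟩, hab, h1⟩)
    simp only [mem_ofPred_eq] at this
    constructor <;> linarith
  have hne : c < d := by
    rcases hcd.eq_or_lt with rfl | h0
    · simp at hcd1; norm_num at hcd1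
    · exact h0
  have heq : ‖Dg γ γ c - Dg γ γ d‖ = 1 := by
    have := intermediate_value_Icc (f := fun t => ‖Dg γ γ c - Dg γ γ t‖) hcd (by fun_prop)
    obtain ⟨t, ht, ht1⟩ := this (show (1:ℝ) ∈ _ from ⟨by simp, hcd1⟩)
    have := (hmin' c t le_rfl ht.1 ht.2 ht1.ge).2
    rwa [this] at ht1
  refine ⟨c, d, hc1, hne, hd2, heq, fun a b ha hab hb => ?_⟩
  rcases le_total ‖Dg γ γ a - Dg γ γ b‖ 1 with h1 | h1
  · exact h1
  · obtain ⟨rfl, rfl⟩ := hmin' a b ha hab hb h1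
    exact heq.le

/-- the constant -/
def c0 (s : ℝ) : ℝ := 128 / (1 - (1/2 : ℝ) ^ (s - 3/2)) ^ 2

lemma c0_pos (hs : s ∈ Set.Ioo (3 / 2 : ℝ) 2) : 0 < c0 s := by
  have : (1/2 : ℝ) ^ (s - 3/2) < 1 := Real.rpow_lt_one (by norm_num) (by norm_num) (by linarith [hs.1])
  unfold c0
  have := sub_pos.2 this
  positivity

lemma key_main (h : InM s γ) (hs : s ∈ Set.Ioo (3 / 2 : ℝ) 2) (hE : EtpE s γ < ⊤) {p q : ℝ}
    (hpq : p < q) :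
    (‖γ q - γ p‖ / 2 ≤ ⟪Dg γ γ p, γ q - γ p⟫ ∧ ‖γ q - γ p‖ / 2 ≤ ⟪Dg γ γ q, γ q - γ p⟫) ∨
      1 ≤ c0 s * Etp s γ * (phi γ q - phi γ p) ^ (2 * (s - 3/2)) := by
  have hmono := phi_mono h
  by_cases hosc : ∀ a b, p ≤ a → a ≤ b → b ≤ min q (p+1) → ‖Dg γ γ a - Dg γ γ b‖ ≤ 1
  · left
    rcases le_or_gt (p+1) q with hq | hq
    · rw [min_eq_right hq] at hosc
      have := (osc_chord h (by linarith : p ≤ p + 1) hosc).1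
      rw [h.1.1 p] at this
      have h2 := hmono (show p < p + 1 by linarith)
      simp at this
      linarith
    · rw [min_eq_left hq.le] at hosc
      have h1 := osc_chord h hpq.le hosc
      have h2 := chord_le h hpq.le
      constructor <;> linarith [h1.1, h1.2]
  · right
    obtain ⟨c, d, hpc, hcd, hdq, h1, hosc'⟩ := osc_interval h (le_min hpq.le (by linarith)) hosc
    have hd1 : d ≤ c + 1 := by linarith [hdq.trans (min_le_right _ _)]
    have hdq' : d ≤ q := hdq.trans (min_le_left _ _)
    set α := s - 3/2 with hα
    have hα0 : 0 < α := by linarith [hs.1]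
    set l := phi γ d - phi γ c with hl
    have hl0 : 0 < l := sub_pos.2 (hmono hcd)
    have hll : l ≤ phi γ q - phi γ p := by
      have := hmono.monotone hdq'; have := hmono.monotone hpc; linarith
    have hc0 := c0_pos hs
    have hkey : ∀ M, 0 < M → Etp s γ ≤ M → 1 ≤ c0 s * M * l ^ (2 * α) := by
      intro M hM hEM
      have := key_sub h hs hE hcd hd1 hM hEM hosc'
      rw [h1] at this
      have h2 := pow_le_pow_left₀ zero_le_one this 2
      have hx : (1/2 : ℝ) ^ α < 1 := Real.rpow_lt_one (by norm_num) (by norm_num) hα0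
      have e : (2 * ((2 * l ^ α * √(8 * M)) / (1 - (1/2) ^ α))) ^ 2 = c0 s * M * l ^ (2 * α) := by
        rw [mul_pow, div_pow, mul_pow, mul_pow, Real.sq_sqrt (by positivity), c0, ← hα, mul_comm 2 α,
          Real.rpow_mul hl0.le, Real.rpow_ofNat]
        ring
      rw [← hα, ← hl, e] at h2
      linarith
    have hlp : 0 < l ^ (2 * α) := by positivity
    have hE0 : 0 ≤ Etp s γ := ENNReal.toReal_nonneg
    have hfin : 1 ≤ c0 s * Etp s γ * l ^ (2 * α) := by
      by_contra hcon
      push Not at hcon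
      set X := c0 s * l ^ (2 * α) with hX
      have hX0 : 0 < X := by positivity
      have h3 := hkey (max (Etp s γ) (1 / (2 * X))) (lt_max_of_lt_right (by positivity)) (le_max_left _ _)
      rcases max_cases (Etp s γ) (1 / (2 * X)) with hh | hh
      · rw [hh.1] at h3; linarith
      · rw [hh.1] at h3
        have : c0 s * (1 / (2 * X)) * l ^ (2 * α) = 1/2 := by
          rw [show c0 s * (1 / (2 * X)) * l ^ (2 * α) = X * (1 / (2 * X)) by rw [hX]; ring]
          field_simp
        linarith
    refine hfin.trans ?_
    gcongr

end key

section fin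
variable {n : ℕ} {s : ℝ} {γ u : ℝ → En n}

lemma bdd_deriv (hu : InHs s u) : ∃ K : ℝ, 0 < K ∧ ∀ x, ‖deriv u x‖ ≤ K := by
  obtain ⟨K, hK⟩ := (isCompact_Icc (a := (0:ℝ)) (b := 1)).exists_bound_of_continuousOn
    hu.contd.continuousOn
  refine ⟨max K 1, by positivity, fun x => ?_⟩
  obtain ⟨y, hy, hxy⟩ := hu.perd.exists_mem_Ico₀ one_pos x
  rw [hxy]
  exact (hK y ⟨hy.1, hy.2.le⟩).trans (le_max_left _ _)

lemma lip_of_bdd (hu : InHs s u) {K : ℝ} (hK : ∀ x, ‖deriv u x‖ ≤ K) (x h : ℝ) :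
    ‖u (x + h) - u x‖ ≤ K * |h| := by
  have := Convex.norm_image_sub_le_of_norm_deriv_le (f := u) (C := K) (s := univ) (x := x) (y := x + h)
    (fun x _ => (hu.hd x).differentiableAt) (fun x _ => hK x) convex_univ trivial trivial
  simpa using this

lemma slope_eq (hu : InHs s u) (x h : ℝ) :
    u (x + h) - u x = h • ∫ θ in (0:ℝ)..1, deriv u (x + h * θ) := by
  rw [intervalIntegral.smul_integral_comp_add_mul, ftc hu]
  simp

lemma inj_shift (h : InM s γ) {x y : ℝ} (hxy : γ x = γ y) : ∃ k : ℤ, x - y = k := by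
  have e : ∀ x, γ x = γ (Int.fract x) := fun x => by
    have := aux_per_int h.1.1 (Int.fract x) ⌊x⌋
    rw [Int.fract_add_floor] at this
    exact this
  rw [e x, e y] at hxy
  have h2 := h.2.1 ⟨Int.fract_nonneg x, Int.fract_lt_one x⟩ ⟨Int.fract_nonneg y, Int.fract_lt_one y⟩ hxy
  exact Int.fract_eq_fract.1 h2

lemma bilip (hg : InM s γ) : ∃ c : ℝ, 0 < c ∧ ∀ x ∈ Icc (0:ℝ) 1, c ≤ ‖deriv γ x‖ ∧
    ∀ h, |h| ≤ 1/2 → c * |h| ≤ ‖γ (x + h) - γ x‖ := by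
  have hc := hg.1.contd
  have hcont : Continuous fun z : ℝ × ℝ => ‖∫ θ in (0:ℝ)..1, deriv γ (z.1 + z.2 * θ)‖ := by
    refine (intervalIntegral.continuous_parametric_intervalIntegral_of_continuous'
      (f := fun (z : ℝ × ℝ) θ => deriv γ (z.1 + z.2 * θ)) ?_ 0 1).norm
    unfold Function.uncurry
    fun_prop
  obtain ⟨z, hz, hmin⟩ := (isCompact_Icc.prod isCompact_Icc : IsCompact
    (Icc (0:ℝ) 1 ×ˢ Icc (-1/2:ℝ) (1/2))).exists_isMinOn
    ⟨(0, 0), by constructor <;> norm_num⟩ hcont.continuousOn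
  have hpos : 0 < ‖∫ θ in (0:ℝ)..1, deriv γ (z.1 + z.2 * θ)‖ := by
    by_cases h0 : z.2 = 0
    · simp only [h0, zero_mul, add_zero, intervalIntegral.integral_const, sub_zero, one_smul]
      exact hg.vpos _
    · rw [norm_pos_iff]
      intro h1
      have h2 := slope_eq hg.1 z.1 z.2
      rw [h1, smul_zero, sub_eq_zero] at h2
      obtain ⟨k, hk⟩ := inj_shift hg h2
      simp only [add_sub_cancel_left] at hk
      obtain ⟨h3, h4⟩ := hz.2
      rw [hk] at h3 h4 h0
      have h5 : k < 1 := by exact_mod_cast (lt_of_le_of_lt h4 (by norm_num) : (k:ℝ) < 1)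
      have h6 : -1 < k := by exact_mod_cast (lt_of_lt_of_le (by norm_num) h3 : (-1:ℝ) < k)
      have : k = 0 := by omega
      simp [this] at h0
  refine ⟨_, hpos, fun x hx => ⟨?_, fun h hh => ?_⟩⟩
  · have := hmin (show (x, (0:ℝ)) ∈ _ from ⟨hx, by norm_num⟩)
    simpa using this
  · have := hmin (show (x, h) ∈ _ from ⟨hx, by rw [abs_le] at hh; constructor <;> linarith [hh.1, hh.2]⟩)
    rw [slope_eq hg.1, norm_smul, mul_comm, Real.norm_eq_abs]
    exact mul_le_mul_of_nonneg_left this (abs_nonneg _)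

lemma taylor_sq (hu : InHs s u) (x h : ℝ) :
    ‖u (x + h) - u x - h • deriv u x‖ₑ ^ 2 ≤
      ENNReal.ofReal (h ^ 2) * ∫⁻ θ in Ioc (0:ℝ) 1, ‖deriv u (x + h * θ) - deriv u x‖ₑ ^ 2 := by
  have hc := hu.contd
  have e : u (x + h) - u x - h • deriv u x =
      h • ∫ θ in Ioc (0:ℝ) 1, (deriv u (x + h * θ) - deriv u x) := by
    rw [← intervalIntegral.integral_of_le zero_le_one, intervalIntegral.integral_sub, smul_sub,
      ← slope_eq hu]
    · simp
    · exact (by fun_prop : Continuous fun θ => deriv u (x + h * θ)).intervalIntegrable _ _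
    · exact intervalIntegrable_const
  have : IsProbabilityMeasure ((volume : Measure ℝ).restrict (Ioc (0:ℝ) 1)) := ⟨by simp⟩
  rw [e, enorm_smul, mul_pow]
  gcongr
  · rw [← ofReal_norm, ← ENNReal.ofReal_pow (norm_nonneg _)]
    simp
  · refine le_trans ?_ (aux_lint_sq _ ?_)
    · gcongr
      exact enorm_integral_le_lintegral_enorm _
    · exact (by fun_prop : Continuous fun θ => ‖deriv u (x + h * θ) - deriv u x‖ₑ).aemeasurable

def Gk (s : ℝ) (u : ℝ → En n) (x h : ℝ) : ℝ≥0∞ :=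
  ‖deriv u (x + h) - deriv u x‖ₑ ^ 2 * ENNReal.ofReal (|h| ^ (1 - 2 * s))

lemma Gk_meas (hu : InHs s u) : Measurable (Function.uncurry (Gk s u)) := by
  have hc := hu.contd
  have h1 : Measurable fun z : ℝ × ℝ => ‖deriv u (z.1 + z.2) - deriv u z.1‖ₑ ^ 2 :=
    (by fun_prop : Continuous fun z : ℝ × ℝ => ‖deriv u (z.1 + z.2) - deriv u z.1‖ₑ).measurable.pow_const 2
  have h2 : Measurable fun z : ℝ × ℝ => ENNReal.ofReal (|z.2| ^ (1 - 2 * s)) := by fun_prop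
  exact h1.mul h2

lemma dT_eq (x h : ℝ) (hh : |h| ≤ 1/2) : dT x (x + h) = |h| := by
  have hb : BddBelow (range fun k : ℤ => |x - (x + h) - (k:ℝ)|) :=
    ⟨0, by rintro _ ⟨k, rfl⟩; exact abs_nonneg _⟩
  apply le_antisymm
  · refine (ciInf_le hb 0).trans ?_
    simp
  · refine le_ciInf fun k => ?_
    by_cases hk : k = 0
    · simp [hk]
    · have h1 : (1:ℝ) ≤ |(k:ℝ)| := by exact_mod_cast Int.one_le_abs hk
      have h2 : |(k:ℝ)| ≤ |x - (x + h) - (k:ℝ)| + |h| := by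
        have := abs_add_le (x - (x + h) - (k:ℝ)) h
        rw [show x - (x + h) - (k:ℝ) + h = -k by ring, abs_neg] at this
        exact this
      linarith

lemma dT_per (x : ℝ) : Function.Periodic (dT x) 1 := fun y => by
  unfold dT
  refine (Equiv.addRight (1:ℤ)).iInf_congr fun k => ?_
  simp only [Equiv.coe_addRight]
  push_cast
  congr 1
  ring

lemma Gk_fin (hu : InHs s u) (hs : s ∈ Set.Ioo (3 / 2 : ℝ) 2) :
    ∫⁻ x in I01, ∫⁻ h in Ioc (-1/2:ℝ) (1/2), Gk s u x h < ⊤ := by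
  refine lt_of_eq_of_lt ?_ hu.2.2
  unfold gagliardoSqE
  refine lintegral_congr fun x => ?_
  have hper : Function.Periodic (fun y => ENNReal.ofReal (‖deriv u y - deriv u x‖ ^ 2 / dT x y ^ (2 * (s - 1) + 1))) 1 :=
    fun y => by simp only [hu.perd y, dT_per x y]
  rw [← aux_lint_per hper (x + -1/2), show x + -1/2 + 1 = x + 1/2 by ring,
    show x + -1/2 = x + (-1/2) by ring, aux_lint_shift]
  refine setLIntegral_congr_fun measurableSet_Ioc fun h hh => ?_
  have hh' : |h| ≤ 1/2 := by rw [abs_le]; constructor <;> linarith [hh.1, hh.2]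
  simp only [Gk]
  rw [dT_eq x h hh', ← ofReal_norm, ← ENNReal.ofReal_pow (norm_nonneg _),
    ← ENNReal.ofReal_mul (by positivity)]
  congr 1
  rw [div_eq_mul_inv, ← Real.rpow_neg (abs_nonneg _)]
  congr 2
  ring

lemma Gk_dil (hs : s ∈ Set.Ioo (3 / 2 : ℝ) 2) (x : ℝ) {θ : ℝ} (hθ : θ ∈ Ioc (0:ℝ) 1) :
    ∫⁻ h in Ioc (-1/2:ℝ) (1/2), ‖deriv u (x + h * θ) - deriv u x‖ₑ ^ 2 * ENNReal.ofReal (|h| ^ (1 - 2 * s))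
      ≤ ∫⁻ h in Ioc (-1/2:ℝ) (1/2), Gk s u x h := by
  have hθ0 := hθ.1
  calc _ ≤ ∫⁻ h in Ioc (-1/2:ℝ) (1/2), ENNReal.ofReal θ * Gk s u x (θ * h) := by
        refine lintegral_mono fun h => ?_
        simp only [Gk]
        rw [mul_comm h θ, mul_left_comm, ← ENNReal.ofReal_mul hθ0.le]
        gcongr
        rw [abs_mul, abs_of_pos hθ0, Real.mul_rpow hθ0.le (abs_nonneg _), ← mul_assoc]
        refine le_mul_of_one_le_left (by positivity) ?_
        have : θ * θ ^ (1 - 2 * s) = θ ^ (2 - 2 * s) := by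
          nth_rw 1 [← Real.rpow_one θ]
          rw [← Real.rpow_add hθ0]; congr 1; ring
        rw [this]
        exact Real.one_le_rpow_of_pos_of_le_one_of_nonpos hθ0 hθ.2 (by linarith [hs.1])
    _ = ∫⁻ y in Ioc (θ * (-1/2)) (θ * (1/2)), Gk s u x y := by
        rw [lintegral_const_mul' _ _ ENNReal.ofReal_ne_top, aux_lint_scale (Gk s u x) _ _ θ hθ0]
    _ ≤ _ := lintegral_mono_set (Ioc_subset_Ioc (by linarith [hθ.2]) (by linarith [hθ.2]))

lemma taylor_int (hu : InHs s u) (hs : s ∈ Set.Ioo (3 / 2 : ℝ) 2) (x : ℝ) :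
    ∫⁻ h in Ioc (-1/2:ℝ) (1/2), ‖u (x + h) - u x - h • deriv u x‖ₑ ^ 2 *
      ENNReal.ofReal (|h| ^ (-(2 * s + 1))) ≤ ∫⁻ h in Ioc (-1/2:ℝ) (1/2), Gk s u x h := by
  have hc := hu.contd
  calc _ ≤ ∫⁻ h in Ioc (-1/2:ℝ) (1/2), ∫⁻ θ in Ioc (0:ℝ) 1,
          ‖deriv u (x + h * θ) - deriv u x‖ₑ ^ 2 * ENNReal.ofReal (|h| ^ (1 - 2 * s)) := by
        refine lintegral_mono fun h => ?_
        simp only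
        rw [lintegral_mul_const' _ _ ENNReal.ofReal_ne_top]
        refine (mul_le_mul_left (taylor_sq hu x h) _).trans (le_of_eq ?_)
        rw [mul_comm (ENNReal.ofReal (h^2)), mul_assoc, ← ENNReal.ofReal_mul (sq_nonneg _)]
        congr 2
        rcases eq_or_ne h 0 with rfl | h0
        · rw [abs_zero, Real.zero_rpow (by linarith [hs.1]), Real.zero_rpow (by linarith [hs.1])]
          simp
        · rw [← sq_abs, ← Real.rpow_natCast, ← Real.rpow_add (abs_pos.2 h0)]
          congr 1; push_cast; ring
    _ = ∫⁻ θ in Ioc (0:ℝ) 1, ∫⁻ h in Ioc (-1/2:ℝ) (1/2),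
          ‖deriv u (x + h * θ) - deriv u x‖ₑ ^ 2 * ENNReal.ofReal (|h| ^ (1 - 2 * s)) := by
        refine lintegral_lintegral_swap (Measurable.aemeasurable ?_)
        have h1 : Measurable fun z : ℝ × ℝ => ‖deriv u (x + z.1 * z.2) - deriv u x‖ₑ ^ 2 :=
          (by fun_prop : Continuous fun z : ℝ × ℝ => ‖deriv u (x + z.1 * z.2) - deriv u x‖ₑ).measurable.pow_const 2
        have h2 : Measurable fun z : ℝ × ℝ => ENNReal.ofReal (|z.1| ^ (1 - 2 * s)) := by fun_prop
        exact h1.mul h2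
    _ ≤ ∫⁻ θ in Ioc (0:ℝ) 1, ∫⁻ h in Ioc (-1/2:ℝ) (1/2), Gk s u x h :=
        setLIntegral_mono' measurableSet_Ioc fun θ hθ => Gk_dil hs x hθ
    _ = _ := by simp

lemma f1_fin (hg : InM s γ) (hu : InHs s u) (hs : s ∈ Set.Ioo (3 / 2 : ℝ) 2) :
    ∫⁻ x in I01, ∫⁻ y in I01, ENNReal.ofReal (‖Rop s γ u x y‖ ^ 2 * muW γ x y) < ⊤ := by
  obtain ⟨c, hc0, hc⟩ := bilip hg
  obtain ⟨K1, hK1, hK1'⟩ := bdd_deriv hg.1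
  obtain ⟨K2, hK2, hK2'⟩ := bdd_deriv hu
  set A : ℝ := K1 ^ 2 * c ^ (-(2 * s + 1)) * (2 * (1 + (K2 / c) ^ 2)) with hA
  have hA0 : 0 ≤ A := by positivity
  have hpt : ∀ x ∈ I01, ∀ h ∈ Ioc (-1/2:ℝ) (1/2),
      ENNReal.ofReal (‖Rop s γ u x (x + h)‖ ^ 2 * muW γ x (x + h)) ≤
      ENNReal.ofReal A * (‖u (x + h) - u x - h • deriv u x‖ₑ ^ 2 * ENNReal.ofReal (|h| ^ (-(2 * s + 1))) +
        ‖γ (x + h) - γ x - h • deriv γ x‖ₑ ^ 2 * ENNReal.ofReal (|h| ^ (-(2 * s + 1)))) := by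
    intro x hx h hh
    have hh' : |h| ≤ 1/2 := by rw [abs_le]; constructor <;> linarith [hh.1, hh.2]
    obtain ⟨hcx, hcl⟩ := hc x ⟨hx.1, hx.2.le⟩
    rcases eq_or_ne h 0 with rfl | h0
    · simp [muW]
    have habs := abs_pos.2 h0
    have hr : 0 < ‖γ (x + h) - γ x‖ := lt_of_lt_of_le (by positivity) (hcl h hh')
    have ev : ∀ v : En n, ‖v‖ₑ ^ 2 = ENNReal.ofReal (‖v‖ ^ 2) := fun v => by
      rw [← ofReal_norm, ← ENNReal.ofReal_pow (norm_nonneg _)]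
    rw [ev, ev, ← ENNReal.ofReal_mul (by positivity), ← ENNReal.ofReal_mul (by positivity),
      ← ENNReal.ofReal_add (by positivity) (by positivity), ← ENNReal.ofReal_mul hA0]
    apply ENNReal.ofReal_le_ofReal
    rw [Rop_mu _ _ hr]
    set a := u (x + h) - u x - h • deriv u x with ha
    set b := γ (x + h) - γ x - h • deriv γ x with hb
    have e1 : u (x + h) - u x - ⟪Dg γ γ x, γ (x + h) - γ x⟫ • Dg γ u x = a - ⟪Dg γ γ x, b⟫ • Dg γ u x := by
      have : ⟪Dg γ γ x, γ (x + h) - γ x⟫ = ⟪Dg γ γ x, b⟫ + h * ‖deriv γ x‖ := by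
        have e2 : γ (x + h) - γ x = b + h • deriv γ x := by rw [hb]; abel
        rw [e2, inner_add_right, inner_smul_right]
        have e5 : ⟪Dg γ γ x, deriv γ x⟫ = ‖deriv γ x‖ := by
          have e6 : ⟪Dg γ γ x, deriv γ x⟫ = ⟪Dg γ γ x, ‖deriv γ x‖ • Dg γ γ x⟫ := by
            rw [← hg.deriv_eq (u := γ) x]
          rw [e6, inner_smul_right, real_inner_self_eq_norm_sq, hg.norm_T]
          ring
        rw [e5]
      rw [this, ha, hg.deriv_eq (u := u) x]
      module
    have hDu : ‖Dg γ u x‖ ≤ K2 / c := by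
      rw [Dg, norm_smul, norm_inv, norm_norm, inv_mul_eq_div]
      have := hK2' x
      gcongr
    have e3 : ‖a - ⟪Dg γ γ x, b⟫ • Dg γ u x‖ ^ 2 ≤ 2 * (1 + (K2 / c) ^ 2) * (‖a‖ ^ 2 + ‖b‖ ^ 2) := by
      have i1 : |⟪Dg γ γ x, b⟫| ≤ ‖b‖ := by simpa [hg.norm_T] using abs_real_inner_le_norm (Dg γ γ x) b
      have i2 : ‖a - ⟪Dg γ γ x, b⟫ • Dg γ u x‖ ≤ ‖a‖ + ‖b‖ * (K2 / c) := by
        refine (norm_sub_le _ _).trans ?_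
        rw [norm_smul, Real.norm_eq_abs]
        gcongr
      calc _ ≤ (‖a‖ + ‖b‖ * (K2 / c)) ^ 2 := by gcongr
        _ ≤ _ := by
          generalize K2 / c = L
          nlinarith [sq_nonneg (‖a‖ - ‖b‖ * L), sq_nonneg (‖a‖ * L), sq_nonneg ‖b‖]
    rw [e1]
    have e4 : (‖γ (x + h) - γ x‖ ^ (2 * s + 1))⁻¹ ≤ c ^ (-(2 * s + 1)) * |h| ^ (-(2 * s + 1)) := by
      rw [← Real.rpow_neg (norm_nonneg _), ← Real.mul_rpow hc0.le (abs_nonneg _)]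
      exact Real.rpow_le_rpow_of_nonpos (by positivity) (hcl h hh') (by linarith [hs.1])
    rw [div_eq_mul_inv]
    calc _ ≤ (2 * (1 + (K2 / c) ^ 2) * (‖a‖ ^ 2 + ‖b‖ ^ 2)) * (c ^ (-(2 * s + 1)) * |h| ^ (-(2 * s + 1))) * (K1 * K1) := by
          have := hK1' x
          have := hK1' (x + h)
          gcongr
      _ = _ := by rw [hA]; ring
  have hx : ∀ x ∈ I01, ∫⁻ y in I01, ENNReal.ofReal (‖Rop s γ u x y‖ ^ 2 * muW γ x y) ≤
      ENNReal.ofReal A * ((∫⁻ h in Ioc (-1/2:ℝ) (1/2), Gk s u x h) + ∫⁻ h in Ioc (-1/2:ℝ) (1/2), Gk s γ x h) := by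
    intro x hx
    have hper : Function.Periodic (fun y => ENNReal.ofReal (‖Rop s γ u x y‖ ^ 2 * muW γ x y)) 1 :=
      fun y => congrArg ENNReal.ofReal (per_f1 hg hu x y)
    rw [← aux_lint_per hper (x + -1/2), show x + -1/2 + 1 = x + 1/2 by ring,
      show x + -1/2 = x + (-1/2) by ring, aux_lint_shift]
    refine (setLIntegral_mono' measurableSet_Ioc (hpt x hx)).trans ?_
    rw [lintegral_const_mul' _ _ ENNReal.ofReal_ne_top, lintegral_add_left]
    · exact mul_le_mul' le_rfl (add_le_add (taylor_int hu hs x) (taylor_int hg.1 hs x))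
    · have h1 := hu.cont
      have h2 : Measurable fun h => ‖u (x + h) - u x - h • deriv u x‖ₑ ^ 2 :=
        (by fun_prop : Continuous fun h => ‖u (x + h) - u x - h • deriv u x‖ₑ).measurable.pow_const 2
      have h3 : Measurable fun h : ℝ => ENNReal.ofReal (|h| ^ (-(2 * s + 1))) := by fun_prop
      exact h2.mul h3
  refine (setLIntegral_mono' measurableSet_Ico hx).trans_lt ?_
  rw [lintegral_const_mul' _ _ ENNReal.ofReal_ne_top, lintegral_add_left
    (Measurable.lintegral_prod_right (Gk_meas hu))]
  exact ENNReal.mul_lt_top ENNReal.ofReal_lt_top (ENNReal.add_lt_top.2 ⟨Gk_fin hu hs, Gk_fin hg.1 hs⟩)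

/-- the ratio of increments is bounded -/
lemma ratio_bdd (hg : InM s γ) (hu : InHs s u) : ∃ A : ℝ, 0 ≤ A ∧ ∀ x ∈ I01, ∀ y,
    ‖u y - u x‖ ^ 2 / ‖γ y - γ x‖ ^ 2 ≤ A := by
  obtain ⟨c, hc0, hc⟩ := bilip hg
  obtain ⟨K, hK, hK'⟩ := bdd_deriv hu
  refine ⟨(K / c) ^ 2, by positivity, fun x hx y => ?_⟩
  obtain ⟨_, hcl⟩ := hc x ⟨hx.1, hx.2.le⟩
  set k := round (y - x)
  set h := y - x - k with hh
  have hh' : |h| ≤ 1/2 := abs_sub_round _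
  have ey : y = (x + h) + k := by rw [hh]; ring
  rw [ey, aux_per_int hu.1, aux_per_int hg.1.1, ← div_pow]
  have h1 := hcl h hh'
  have h2 := lip_of_bdd hu hK' x h
  rcases eq_or_ne h 0 with h0 | h0
  · simp [h0]; positivity
  have := abs_pos.2 h0
  have : ‖u (x + h) - u x‖ / ‖γ (x + h) - γ x‖ ≤ K / c := by
    calc _ ≤ (K * |h|) / (c * |h|) := by gcongr
      _ = K / c := by field_simp
  gcongr

lemma f2_fin (hg : InM s γ) (hu : InHs s u) (hs : s ∈ Set.Ioo (3 / 2 : ℝ) 2) :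
    ∫⁻ x in I01, ∫⁻ y in I01, ENNReal.ofReal
      (‖Rop s γ γ x y‖ ^ 2 * (⟪u y - u x, u y - u x⟫ / ‖γ y - γ x‖ ^ 2) * muW γ x y) < ⊤ := by
  obtain ⟨A, hA, hA'⟩ := ratio_bdd hg hu
  have : ∀ x ∈ I01, ∫⁻ y in I01, ENNReal.ofReal
      (‖Rop s γ γ x y‖ ^ 2 * (⟪u y - u x, u y - u x⟫ / ‖γ y - γ x‖ ^ 2) * muW γ x y) ≤
      ENNReal.ofReal A * ∫⁻ y in I01, ENNReal.ofReal (‖Rop s γ γ x y‖ ^ 2 * muW γ x y) := by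
    intro x hx
    rw [← lintegral_const_mul' _ _ ENNReal.ofReal_ne_top]
    refine lintegral_mono fun y => ?_
    simp only
    rw [← ENNReal.ofReal_mul hA, real_inner_self_eq_norm_sq]
    apply ENNReal.ofReal_le_ofReal
    have h1 := hA' x hx y
    have h2 := mu_nonneg (γ := γ) x y
    calc _ ≤ ‖Rop s γ γ x y‖ ^ 2 * A * muW γ x y := by gcongr
      _ = _ := by ring
  refine (setLIntegral_mono' measurableSet_Ico this).trans_lt ?_
  rw [lintegral_const_mul' _ _ ENNReal.ofReal_ne_top]
  exact ENNReal.mul_lt_top ENNReal.ofReal_lt_top (f1_fin hg hg.1 hs)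

end fin

section fin2
variable {n : ℕ} {s : ℝ} {γ u : ℝ → En n}

lemma arcDist_ge (h : InM s γ) (x y : ℝ) : ‖γ y - γ x‖ ≤ arcDist γ x y := by
  apply le_ciInf
  intro k
  have := chord_le' h x (y + k)
  rwa [aux_per_int h.1.1] at this

lemma bad_case (h : InM s γ) (hs : s ∈ Set.Ioo (3 / 2 : ℝ) 2) (hE : EtpE s γ < ⊤) {x y : ℝ}
    (hr : 0 < ‖γ y - γ x‖)
    (hbad : ¬ ((‖γ y - γ x‖ / 2 ≤ ⟪Dg γ γ x, γ y - γ x⟫ ∧ ‖γ y - γ x‖ / 2 ≤ ⟪Dg γ γ y, γ y - γ x⟫) ∨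
      (⟪Dg γ γ x, γ y - γ x⟫ ≤ -(‖γ y - γ x‖ / 2) ∧ ⟪Dg γ γ y, γ y - γ x⟫ ≤ -(‖γ y - γ x‖ / 2)))) :
    1 ≤ (c0 s * Etp s γ) ^ ((s - 3/2 + 1) / (s - 3/2)) * arcDist γ x y ^ (2 * s - 1) := by
  have hα : 0 < s - 3/2 := by linarith [hs.1]
  rw [not_or] at hbad
  have key : ∀ k : ℤ, 1 ≤ c0 s * Etp s γ * |∫ t in x..(y + (k : ℝ)), ‖deriv γ t‖| ^ (2 * (s - 3/2)) := by
    intro k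
    have e1 : γ (y + k) = γ y := aux_per_int h.1.1 y k
    have e2 : Dg γ γ (y + k) = Dg γ γ y := aux_per_int (h.per_Dg h.1) y k
    rw [phi_sub h]
    rcases lt_trichotomy x (y + k) with hlt | heq | hgt
    · rw [abs_of_nonneg (sub_nonneg.2 ((phi_mono h).monotone hlt.le))]
      have := key_main h hs hE hlt
      rw [e1, e2] at this
      exact this.resolve_left hbad.1
    · rw [heq, e1] at hr
      simp at hr
    · rw [abs_sub_comm, abs_of_nonneg (sub_nonneg.2 ((phi_mono h).monotone hgt.le))]
      have := key_main h hs hE hgt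
      rw [e1, e2] at this
      refine this.resolve_left fun hh => hbad.2 ?_
      rw [← neg_sub (γ y) (γ x), norm_neg, inner_neg_right, inner_neg_right] at hh
      constructor <;> linarith [hh.1, hh.2]
  set a := c0 s * Etp s γ with ha
  have ha0 : 0 < a := by
    by_contra hc
    have h1 := key 0
    have : 0 ≤ |∫ t in x..(y + ((0:ℤ) : ℝ)), ‖deriv γ t‖| ^ (2 * (s - 3/2)) := by positivity
    nlinarith
  have hd : (a⁻¹) ^ (2 * (s - 3/2))⁻¹ ≤ arcDist γ x y := by
    apply le_ciInf
    intro k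
    rw [Real.rpow_inv_le_iff_of_pos (by positivity) (by positivity) (by positivity),
      inv_le_iff_one_le_mul₀ ha0, mul_comm]
    exact key k
  have hd0 : 0 ≤ arcDist γ x y := (norm_nonneg _).trans (arcDist_ge h x y)
  rw [Real.rpow_inv_le_iff_of_pos (by positivity) hd0 (by positivity),
      inv_le_iff_one_le_mul₀ ha0, mul_comm] at hd
  have hq : 0 ≤ (s - 3/2 + 1) / (s - 3/2) := by positivity
  have := Real.one_le_rpow hd hq
  rw [Real.mul_rpow ha0.le (by positivity), ← Real.rpow_mul hd0] at this
  have e : 2 * (s - 3/2) * ((s - 3/2 + 1) / (s - 3/2)) = 2 * s - 1 := by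
    rw [mul_assoc, mul_div_cancel₀ _ hα.ne']
    ring
  rwa [e] at this

lemma pt_main (h : InM s γ) (hs : s ∈ Set.Ioo (3 / 2 : ℝ) 2) (hE : EtpE s γ < ⊤) {x y : ℝ}
    (hx : x ∈ I01) (hy : y ∈ I01) :
    ‖Dg γ u y - Dg γ u x‖ ^ 2 / arcDist γ x y ^ (2 * (s - 1)) * nuW γ x y ≤
      16 * (‖Rop s γ u x y‖ ^ 2 * muW γ x y) + 16 * (‖Rop s γ u y x‖ ^ 2 * muW γ y x) +
      32 * (‖Rop s γ γ x y‖ ^ 2 * (⟪u y - u x, u y - u x⟫ / ‖γ y - γ x‖ ^ 2) * muW γ x y) +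
      32 * (‖Rop s γ γ y x‖ ^ 2 * (⟪u x - u y, u x - u y⟫ / ‖γ x - γ y‖ ^ 2) * muW γ y x) +
      2 * (c0 s * Etp s γ) ^ ((s - 3/2 + 1) / (s - 3/2)) *
        (⟪Dg γ u x, Dg γ u x⟫ * ‖deriv γ x‖ * ‖deriv γ y‖) +
      2 * (c0 s * Etp s γ) ^ ((s - 3/2 + 1) / (s - 3/2)) *
        (⟪Dg γ u y, Dg γ u y⟫ * ‖deriv γ y‖ * ‖deriv γ x‖) := by
  have hc0 := c0_pos hs
  have hE0 : 0 ≤ Etp s γ := ENNReal.toReal_nonneg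
  simp only [real_inner_self_eq_norm_sq]
  have m1 := mu_nonneg (γ := γ) x y
  have m2 := mu_nonneg (γ := γ) y x
  rcases eq_or_ne x y with rfl | hxy
  · rw [sub_self, norm_zero]
    simp only [ne_eq, OfNat.ofNat_ne_zero, not_false_eq_true, zero_pow, zero_div, zero_mul]
    positivity
  have hr : 0 < ‖γ y - γ x‖ := by
    rw [norm_pos_iff, sub_ne_zero]
    exact fun e => hxy (h.2.1 hx hy e.symm)
  have hdr := arcDist_ge h x y
  have hd0 : 0 < arcDist γ x y := hr.trans_le hdr
  have eF : ‖Dg γ u y - Dg γ u x‖ ^ 2 / arcDist γ x y ^ (2 * (s - 1)) * nuW γ x y =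
      ‖Dg γ u y - Dg γ u x‖ ^ 2 * (‖deriv γ x‖ * ‖deriv γ y‖) / arcDist γ x y ^ (2 * s - 1) := by
    rw [nuW, show 2 * s - 1 = 2 * (s - 1) + 1 by ring, Real.rpow_add_one hd0.ne']
    field_simp
  rw [eF]
  by_cases hg : (‖γ y - γ x‖ / 2 ≤ ⟪Dg γ γ x, γ y - γ x⟫ ∧ ‖γ y - γ x‖ / 2 ≤ ⟪Dg γ γ y, γ y - γ x⟫) ∨
      (⟪Dg γ γ x, γ y - γ x⟫ ≤ -(‖γ y - γ x‖ / 2) ∧ ⟪Dg γ γ y, γ y - γ x⟫ ≤ -(‖γ y - γ x‖ / 2))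
  · have hp := pt_near (U := u y - u x) (p := Dg γ u x) (q := Dg γ u y) (h.norm_T x) (h.norm_T y) hr hg
    have e1 := Rop_mu (s := s) (u := u) x y hr
    have e2 := Rop_mu' (s := s) (u := u) x y hr
    have e3 := Rop_mu (s := s) (u := γ) x y hr
    have e4 := Rop_mu' (s := s) (u := γ) x y hr
    have step : ‖Dg γ u y - Dg γ u x‖ ^ 2 * (‖deriv γ x‖ * ‖deriv γ y‖) / arcDist γ x y ^ (2 * s - 1) ≤
       16 * (‖Rop s γ u x y‖ ^ 2 * muW γ x y) + 16 * (‖Rop s γ u y x‖ ^ 2 * muW γ y x) +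
      32 * (‖Rop s γ γ x y‖ ^ 2 * (‖u y - u x‖ ^ 2 / ‖γ y - γ x‖ ^ 2) * muW γ x y) +
      32 * (‖Rop s γ γ y x‖ ^ 2 * (‖u x - u y‖ ^ 2 / ‖γ x - γ y‖ ^ 2) * muW γ y x) := by
      rw [norm_sub_rev (u x), norm_sub_rev (γ x), mul_right_comm (‖Rop s γ γ x y‖ ^ 2),
        mul_right_comm (‖Rop s γ γ y x‖ ^ 2), e1, e2, e3, e4]
      have hrp : ‖γ y - γ x‖ ^ (2 * s + 1) = ‖γ y - γ x‖ ^ (2 * s - 1) * ‖γ y - γ x‖ ^ 2 := by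
        rw [← Real.rpow_natCast, ← Real.rpow_add hr]; congr 1; push_cast; ring
      calc _ ≤ ‖Dg γ u y - Dg γ u x‖ ^ 2 * (‖deriv γ x‖ * ‖deriv γ y‖) / ‖γ y - γ x‖ ^ (2 * s - 1) := by
            have : 0 ≤ 2 * s - 1 := by linarith [hs.1]
            gcongr
        _ = (‖γ y - γ x‖ ^ 2 * ‖Dg γ u y - Dg γ u x‖ ^ 2) * ((‖deriv γ x‖ * ‖deriv γ y‖) / ‖γ y - γ x‖ ^ (2 * s + 1)) := by
            rw [hrp]; field_simp
        _ ≤ _ * ((‖deriv γ x‖ * ‖deriv γ y‖) / ‖γ y - γ x‖ ^ (2 * s + 1)) :=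
            mul_le_mul_of_nonneg_right hp (by positivity)
        _ = _ := by ring
    have p1 : 0 ≤ 2 * (c0 s * Etp s γ) ^ ((s - 3/2 + 1) / (s - 3/2)) *
        (‖Dg γ u x‖ ^ 2 * ‖deriv γ x‖ * ‖deriv γ y‖) := by positivity
    have p2 : 0 ≤ 2 * (c0 s * Etp s γ) ^ ((s - 3/2 + 1) / (s - 3/2)) *
        (‖Dg γ u y‖ ^ 2 * ‖deriv γ y‖ * ‖deriv γ x‖) := by positivity
    linarith
  · have hb := bad_case h hs hE hr hg
    set K := (c0 s * Etp s γ) ^ ((s - 3/2 + 1) / (s - 3/2)) with hK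
    have hK0 : 0 ≤ K := by positivity
    have hN : ‖Dg γ u y - Dg γ u x‖ ^ 2 ≤ 2 * (‖Dg γ u x‖ ^ 2 + ‖Dg γ u y‖ ^ 2) := by
      have := norm_sub_le (Dg γ u y) (Dg γ u x)
      have h2 : ‖Dg γ u y - Dg γ u x‖ ^ 2 ≤ (‖Dg γ u y‖ + ‖Dg γ u x‖) ^ 2 := by gcongr
      nlinarith [sq_nonneg (‖Dg γ u y‖ - ‖Dg γ u x‖)]
    have hinv : 1 / arcDist γ x y ^ (2 * s - 1) ≤ K := by
      rw [div_le_iff₀ (by positivity)]; exact hb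
    have step : ‖Dg γ u y - Dg γ u x‖ ^ 2 * (‖deriv γ x‖ * ‖deriv γ y‖) / arcDist γ x y ^ (2 * s - 1) ≤
        2 * K * (‖Dg γ u x‖ ^ 2 * ‖deriv γ x‖ * ‖deriv γ y‖) +
        2 * K * (‖Dg γ u y‖ ^ 2 * ‖deriv γ y‖ * ‖deriv γ x‖) := by
      calc _ = ‖Dg γ u y - Dg γ u x‖ ^ 2 * (‖deriv γ x‖ * ‖deriv γ y‖) * (1 / arcDist γ x y ^ (2 * s - 1)) := by ring
        _ ≤ (2 * (‖Dg γ u x‖ ^ 2 + ‖Dg γ u y‖ ^ 2)) * (‖deriv γ x‖ * ‖deriv γ y‖) * K := by gcongr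
        _ = _ := by ring
    refine step.trans ?_
    rw [add_assoc _ (2 * K * _)]
    apply le_add_of_nonneg_left
    positivity

lemma intOn {f : ℝ → ℝ} (hf : Continuous f) : IntegrableOn f I01 :=
  (hf.integrableOn_Icc (a := 0) (b := 1)).mono_set Ico_subset_Icc_self

lemma lint_g (h : InM s γ) (hu : InHs s u) :
    ∫⁻ x in I01, ∫⁻ y in I01, ENNReal.ofReal (⟪Dg γ u x, Dg γ u x⟫ * ‖deriv γ x‖ * ‖deriv γ y‖) =
      ENNReal.ofReal (innerH1g γ u u * arcLen γ) := by
  have h1 := h.cont_Dg hu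
  have h2 := h.1.contd
  have p : ∀ x, 0 ≤ ⟪Dg γ u x, Dg γ u x⟫ * ‖deriv γ x‖ := fun x =>
    mul_nonneg real_inner_self_nonneg (norm_nonneg _)
  have hc : Continuous fun x => ⟪Dg γ u x, Dg γ u x⟫ * ‖deriv γ x‖ := (h1.inner h1).mul h2.norm
  simp_rw [ENNReal.ofReal_mul (p _), lintegral_const_mul' _ _ ENNReal.ofReal_ne_top]
  rw [← ofReal_integral_eq_lintegral_ofReal (intOn h2.norm) (ae_of_all _ fun x => norm_nonneg _),
    lintegral_mul_const' _ _ ENNReal.ofReal_ne_top,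
    ← ofReal_integral_eq_lintegral_ofReal (intOn hc) (ae_of_all _ p),
    ← ENNReal.ofReal_mul (integral_nonneg p)]
  rfl

lemma main1 (h : InM s γ) (hu : InHs s u) (hs : s ∈ Set.Ioo (3 / 2 : ℝ) 2) :
    gagGammaSq s γ u ≤ 32 * B1 s γ u u + 64 * B2 s γ u u +
      4 * (c0 s * Etp s γ) ^ ((s - 3/2 + 1) / (s - 3/2)) * (innerH1g γ u u * arcLen γ) := by
  have hc0 := c0_pos hs
  have hE0 : 0 ≤ Etp s γ := ENNReal.toReal_nonneg
  have hE : EtpE s γ < ⊤ := f1_fin h h.1 hs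
  set K := (c0 s * Etp s γ) ^ ((s - 3/2 + 1) / (s - 3/2)) with hK
  have hK0 : 0 ≤ K := by positivity
  have hH : 0 ≤ innerH1g γ u u := integral_nonneg fun x =>
    mul_nonneg real_inner_self_nonneg (norm_nonneg _)
  have hL : 0 ≤ arcLen γ := integral_nonneg fun x => norm_nonneg _
  let f1 : ℝ → ℝ → ℝ := fun x y => ‖Rop s γ u x y‖ ^ 2 * muW γ x y
  let f2 : ℝ → ℝ → ℝ := fun x y =>
    ‖Rop s γ γ x y‖ ^ 2 * (⟪u y - u x, u y - u x⟫ / ‖γ y - γ x‖ ^ 2) * muW γ x y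
  let f3 : ℝ → ℝ → ℝ := fun x y => ⟪Dg γ u x, Dg γ u x⟫ * ‖deriv γ x‖ * ‖deriv γ y‖
  have q1 : ∀ x y, 0 ≤ f1 x y := fun x y => mul_nonneg (sq_nonneg _) (mu_nonneg x y)
  have q2 : ∀ x y, 0 ≤ f2 x y := fun x y => mul_nonneg (mul_nonneg (sq_nonneg _)
    (div_nonneg real_inner_self_nonneg (sq_nonneg _))) (mu_nonneg x y)
  have q3 : ∀ x y, 0 ≤ f3 x y := fun x y => mul_nonneg
    (mul_nonneg real_inner_self_nonneg (norm_nonneg _)) (norm_nonneg _)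
  have m1 : Measurable (Function.uncurry f1) := meas_f1 h hu
  have m2 : Measurable (Function.uncurry f2) := by
    have i1 := h.1.cont
    have i2 := hu.cont
    refine ((((meas_Rop h h.1).norm.pow_const 2)).mul (Measurable.div ?_ ?_)).mul (meas_mu h)
    · exact (by fun_prop : Continuous fun z : ℝ × ℝ => ⟪u z.2 - u z.1, u z.2 - u z.1⟫).measurable
    · exact (by fun_prop : Continuous fun z : ℝ × ℝ => ‖γ z.2 - γ z.1‖ ^ 2).measurable
  have m3 : Measurable (Function.uncurry f3) := by
    have i1 := h.cont_Dg hu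
    have i2 := h.1.contd
    exact (by fun_prop : Continuous fun z : ℝ × ℝ =>
      ⟪Dg γ u z.1, Dg γ u z.1⟫ * ‖deriv γ z.1‖ * ‖deriv γ z.2‖).measurable
  have b1 : ENNReal.ofReal (B1 s γ u u) = ∫⁻ x in I01, ∫⁻ y in I01, ENNReal.ofReal (f1 x y) := by
    rw [← aux_bochner m1 q1 (f1_fin h hu hs)]
    simp only [B1, real_inner_self_eq_norm_sq, f1]
  have b2 : ENNReal.ofReal (B2 s γ u u) = ∫⁻ x in I01, ∫⁻ y in I01, ENNReal.ofReal (f2 x y) := by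
    rw [← aux_bochner m2 q2 (f2_fin h hu hs)]
    simp only [B2, f2]
  have b3 := lint_g h hu
  have hB1 : 0 ≤ B1 s γ u u := integral_nonneg fun x => integral_nonneg fun y =>
    mul_nonneg real_inner_self_nonneg (mu_nonneg x y)
  have hB2 : 0 ≤ B2 s γ u u := integral_nonneg fun x => integral_nonneg fun y => q2 x y
  -- sum lemma
  have dbl : ∀ (a : ℝ) (f : ℝ → ℝ → ℝ), 0 ≤ a → Measurable (Function.uncurry f) →
      ∀ (g : ℝ → ℝ → ℝ≥0∞), 
      (∫⁻ x in I01, ∫⁻ y in I01, (g x y + (ENNReal.ofReal (a * f x y) + ENNReal.ofReal (a * f y x)))) =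
      (∫⁻ x in I01, ∫⁻ y in I01, g x y) +
        ENNReal.ofReal (2 * a) * ∫⁻ x in I01, ∫⁻ y in I01, ENNReal.ofReal (f x y) := by
    intro a f ha hf g
    have hf1 : Measurable (Function.uncurry fun x y => ENNReal.ofReal (f x y)) := hf.ennreal_ofReal
    have hf2 : Measurable (Function.uncurry fun x y => ENNReal.ofReal (f y x)) :=
      hf1.comp measurable_swap
    have g1 : ∀ x, Measurable fun y => ENNReal.ofReal a * ENNReal.ofReal (f x y) := fun x =>
      (hf1.comp measurable_prodMk_left).const_mul _
    have g2 : ∀ x, Measurable fun y => ENNReal.ofReal a * ENNReal.ofReal (f y x) := fun x =>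
      (hf2.comp measurable_prodMk_left).const_mul _
    have k1 : Measurable fun x => ∫⁻ y in I01, ENNReal.ofReal (f x y) :=
      Measurable.lintegral_prod_right hf1
    have k2 : Measurable fun x => ∫⁻ y in I01, ENNReal.ofReal (f y x) :=
      Measurable.lintegral_prod_right hf2
    simp_rw [ENNReal.ofReal_mul ha]
    have : ∀ x, (∫⁻ y in I01, (g x y + (ENNReal.ofReal a * ENNReal.ofReal (f x y) +
        ENNReal.ofReal a * ENNReal.ofReal (f y x)))) = (∫⁻ y in I01, g x y) +
        (ENNReal.ofReal a * (∫⁻ y in I01, ENNReal.ofReal (f x y)) +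
         ENNReal.ofReal a * ∫⁻ y in I01, ENNReal.ofReal (f y x)) := by
      intro x
      have g3 : Measurable fun y => ENNReal.ofReal a * ENNReal.ofReal (f x y) +
        ENNReal.ofReal a * ENNReal.ofReal (f y x) := (g1 x).add (g2 x)
      rw [lintegral_add_right _ g3, lintegral_add_right _ (g2 x),
        lintegral_const_mul' _ _ ENNReal.ofReal_ne_top, lintegral_const_mul' _ _ ENNReal.ofReal_ne_top]
    simp_rw [this]
    have k3 : Measurable fun x => ENNReal.ofReal a * (∫⁻ y in I01, ENNReal.ofReal (f x y)) +
         ENNReal.ofReal a * ∫⁻ y in I01, ENNReal.ofReal (f y x) :=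
      (k1.const_mul _).add (k2.const_mul _)
    rw [lintegral_add_right _ k3,
      lintegral_add_right _ (k2.const_mul _),
      lintegral_const_mul' _ _ ENNReal.ofReal_ne_top, lintegral_const_mul' _ _ ENNReal.ofReal_ne_top,
      aux_swap hf1, ← add_mul, ← ENNReal.ofReal_add ha ha, two_mul]
  have big : gagGammaSqE s γ u ≤ ENNReal.ofReal (32 * B1 s γ u u + 64 * B2 s γ u u +
      4 * K * (innerH1g γ u u * arcLen γ)) := by
    calc gagGammaSqE s γ u ≤ ∫⁻ x in I01, ∫⁻ y in I01,
          (((0 + (ENNReal.ofReal (16 * f1 x y) + ENNReal.ofReal (16 * f1 y x))) +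
          (ENNReal.ofReal (32 * f2 x y) + ENNReal.ofReal (32 * f2 y x))) +
          (ENNReal.ofReal (2 * K * f3 x y) + ENNReal.ofReal (2 * K * f3 y x))) := by
          refine setLIntegral_mono' measurableSet_Ico fun x hx => ?_
          refine setLIntegral_mono' measurableSet_Ico fun y hy => ?_
          have w := pt_main (u := u) h hs hE hx hy
          have r1 := q1 x y
          have r2 := q1 y x
          have r3 := q2 x y
          have r4 := q2 y x
          have r5 := q3 x y
          have r6 := q3 y x
          rw [zero_add, ← ENNReal.ofReal_add (by positivity) (by positivity),
            ← ENNReal.ofReal_add (by positivity) (by positivity),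
            ← ENNReal.ofReal_add (by positivity) (by positivity),
            ← ENNReal.ofReal_add (by positivity) (by positivity),
            ← ENNReal.ofReal_add (by positivity) (by positivity)]
          apply ENNReal.ofReal_le_ofReal
          refine w.trans (le_of_eq ?_)
          simp only [f1, f2, f3, ← hK]
          ring
      _ = _ := by
          rw [dbl (2 * K) f3 (by positivity) m3, dbl 32 f2 (by norm_num) m2,
            dbl 16 f1 (by norm_num) m1, ← b1, ← b2, b3, ENNReal.ofReal_add (by positivity) (by positivity),
            ENNReal.ofReal_add (by positivity) (by positivity), ENNReal.ofReal_mul (by norm_num),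
            ENNReal.ofReal_mul (p := 64) (by norm_num), ENNReal.ofReal_mul (p := 4 * K) (by positivity)]
          simp only [lintegral_zero, zero_add]
          norm_num
          congr 2
          ring
  rw [gagGammaSq]
  exact ENNReal.toReal_le_of_le_ofReal (by positivity) big

end fin2
/-- coercivity estimate: for `s ∈ (3/2,2)` and `α = s - 3/2` there
is `0 < C < ∞`, depending only on `s`, such that for all `γ ∈ 𝓜` and `u ∈ H^s(𝕋,ℝⁿ)`:
`[u]²_{H^s(γ)} ≤ 32·B¹_γ(u,u) + 128·B²_γ(u,u) + C·L(γ)·E(γ)^{(α+1)/α}·⟨u,u⟩_{H¹(γ)}`, and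
`‖u‖_{H^s(γ)} ≤ √(32 + C·L(γ)·E(γ)^{(α+1)/α}) · √(G_γ(u,u))`. -/
theorem statement8 (s : ℝ) (hs : s ∈ Set.Ioo (3 / 2 : ℝ) 2) :
    ∃ C : ℝ, 0 < C ∧ ∀ (n : ℕ), 2 ≤ n → ∀ γ u : ℝ → En n, InM s γ → InHs s u →
      gagGammaSq s γ u ≤
          32 * B1 s γ u u + 128 * B2 s γ u u +
            C * arcLen γ * Etp s γ ^ ((s - 3 / 2 + 1) / (s - 3 / 2)) * innerH1g γ u u ∧
      HsGammaNorm s γ u ≤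
          Real.sqrt (32 + C * arcLen γ * Etp s γ ^ ((s - 3 / 2 + 1) / (s - 3 / 2))) *
            Real.sqrt (Gmet s γ u u) := by
  have hc0 := c0_pos hs
  have hα : 0 < s - 3/2 := by linarith [hs.1]
  refine ⟨4 * c0 s ^ ((s - 3/2 + 1) / (s - 3/2)), by positivity, ?_⟩
  intro n _ γ u h hu
  have hE0 : 0 ≤ Etp s γ := ENNReal.toReal_nonneg
  have hm := main1 h hu hs
  rw [Real.mul_rpow hc0.le hE0] at hm
  have hH : 0 ≤ innerH1g γ u u := integral_nonneg fun x =>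
    mul_nonneg real_inner_self_nonneg (norm_nonneg _)
  have hL2 : 0 ≤ innerL2g γ u u := integral_nonneg fun x =>
    mul_nonneg real_inner_self_nonneg (norm_nonneg _)
  have hL : 0 ≤ arcLen γ := integral_nonneg fun x => norm_nonneg _
  have hB1 : 0 ≤ B1 s γ u u := integral_nonneg fun x => integral_nonneg fun y =>
    mul_nonneg real_inner_self_nonneg (mu_nonneg x y)
  have hB2 : 0 ≤ B2 s γ u u := integral_nonneg fun x => integral_nonneg fun y =>
    mul_nonneg (mul_nonneg (sq_nonneg _)
      (div_nonneg real_inner_self_nonneg (sq_nonneg _))) (mu_nonneg x y)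
  have hB3 : 0 ≤ B3 s γ u u := integral_nonneg fun x => integral_nonneg fun y =>
    mul_nonneg (mul_nonneg (sq_nonneg _)
      (add_nonneg real_inner_self_nonneg real_inner_self_nonneg)) (mu_nonneg x y)
  set Q := c0 s ^ ((s - 3/2 + 1) / (s - 3/2)) with hQ
  set W := Etp s γ ^ ((s - 3/2 + 1) / (s - 3/2)) with hW
  have hQ0 : 0 ≤ Q := by positivity
  have hW0 : 0 ≤ W := by positivity
  have first : gagGammaSq s γ u ≤ 32 * B1 s γ u u + 128 * B2 s γ u u +
      4 * Q * arcLen γ * W * innerH1g γ u u := by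
    have : 4 * (Q * W) * (innerH1g γ u u * arcLen γ) = 4 * Q * arcLen γ * W * innerH1g γ u u := by ring
    linarith
  refine ⟨first, ?_⟩
  set M := 4 * Q * arcLen γ * W with hM
  have hM0 : 0 ≤ M := by positivity
  rw [HsGammaNorm, ← Real.sqrt_mul (by positivity)]
  apply Real.sqrt_le_sqrt
  rw [HsGammaNormSq]
  have hG : innerH1g γ u u ≤ Gmet s γ u u := by
    unfold Gmet
    have : 0 ≤ (2 * s + 1) * B2 s γ u u := mul_nonneg (by linarith) hB2
    linarith
  have h1 := mul_le_mul_of_nonneg_left hG hM0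
  have h2 : innerL2g γ u u + innerH1g γ u u + 32 * B1 s γ u u + 128 * B2 s γ u u ≤
      32 * Gmet s γ u u := by
    unfold Gmet
    have : 4 * B2 s γ u u ≤ (2 * s + 1) * B2 s γ u u :=
      mul_le_mul_of_nonneg_right (by linarith [hs.1]) hB2
    linarith
  linarith
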